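/- arXiv:2502.08809 — 2 statements merged into one kernel-verified Lean document; each statement's English description precedes it below -/
import Mathlib

section
/- Suppose condition (C) holds. If Ω ⊆ E_k is open and Φ : Ω → A is locally bounded in Ω and differentiable in the sense of Gâteaux at every point of Ω, then Φ is continuous in Ω. -/
open Filter Topology

/-- Local boundedness of `Φ` on `Ω`: every point of `Ω` has a neighborhood in `Ω`
on which `Φ` is bounded. -/
def IsLocBoundedOn {A : Type*} [NormedCommRing A] [NormedAlgebra ℂ A]
    {E : Submodule ℝ A} (Ω : Set E) (Φ : E → A) : Prop :=
  ∀ ζ ∈ Ω, ∃ r > (0 : ℝ), ∃ C : ℝ, ∀ z ∈ Ω, ‖z - ζ‖ < r → ‖Φ z‖ ≤ C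

/-- Differentiability in the sense of Gâteaux at `ζ` with Gâteaux derivative `g`:
for every `h ∈ E`, `(Φ(ζ + δ h) - Φ(ζ))/δ → h * g` as the real `δ → 0⁺`. -/
def GateauxDiffAt {A : Type*} [NormedCommRing A] [NormedAlgebra ℂ A]
    {E : Submodule ℝ A} (Φ : E → A) (ζ : E) (g : A) : Prop :=
  ∀ h : E, Tendsto (fun δ : ℝ => δ⁻¹ • (Φ (ζ + δ • h) - Φ ζ))
    (𝓝[>] (0 : ℝ)) (𝓝 ((h : A) * g))

/-- Differentiability in the sense of Lorch at `ζ` (relative to `Ω`) with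
Lorch derivative `L`. -/
def LorchDiffAt {A : Type*} [NormedCommRing A] [NormedAlgebra ℂ A]
    {E : Submodule ℝ A} (Ω : Set E) (Φ : E → A) (ζ : E) (L : A) : Prop :=
  ∀ ε > (0 : ℝ), ∃ δ > (0 : ℝ), ∀ h : E, ‖h‖ < δ → ζ + h ∈ Ω →
    ‖Φ (ζ + h) - Φ ζ - (h : A) * L‖ ≤ ε * ‖h‖

/-- Condition (C): every character of `A` maps `E` onto all of `ℂ`. -/
def CondC {A : Type*} [NormedCommRing A] [NormedAlgebra ℂ A]
    (E : Submodule ℝ A) : Prop :=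
  ∀ φ : A →ₐ[ℂ] ℂ, Function.Surjective fun x : E => φ (x : A)

set_option linter.all false

section aux

open MeasureTheory Metric Set

/-- The real-linear map `x + i y ↦ x + y a`. -/
noncomputable def hatA {A : Type*} [NormedCommRing A] [NormedAlgebra ℂ A] (a : A) : ℂ →L[ℝ] A :=
  Complex.reCLM.smulRight (1 : A) + Complex.imCLM.smulRight a

/-- Directional differentiability in the plane. -/
def PlaneDiff {A : Type*} [NormedCommRing A] [NormedAlgebra ℂ A] (a : A) (f : ℂ → A) (z : ℂ) :
    Prop :=
  ∃ g : A, ∀ h : ℂ, HasDerivAt (fun t : ℝ => f (z + t • h)) (hatA a h * g) 0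

section kernel

variable {A : Type*} [NormedCommRing A] [NormedAlgebra ℂ A] [FiniteDimensional ℂ A]

theorem hatA_apply (a : A) (z : ℂ) : hatA a z = z.re • (1 : A) + z.im • a := by
  simp [hatA]

theorem isUnit_of_char (b : A) (h : ∀ φ : A →ₐ[ℂ] ℂ, φ b ≠ 0) : IsUnit b := by
  haveI : CompleteSpace A := FiniteDimensional.complete ℂ A
  by_contra hb
  obtain ⟨f, hf⟩ := WeakDual.CharacterSpace.exists_apply_eq_zero hb
  exact h (WeakDual.CharacterSpace.toAlgHom f) hf

theorem char_real_smul (φ : A →ₐ[ℂ] ℂ) (r : ℝ) (x : A) : φ (r • x) = (r : ℂ) * φ x := by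
  have : r • x = (r : ℂ) • x := (Complex.coe_smul r x).symm
  rw [this, map_smul, smul_eq_mul]

theorem char_hatA (φ : A →ₐ[ℂ] ℂ) (a : A) (z : ℂ) :
    φ (hatA a z) = z.re + z.im * φ a := by
  rw [hatA_apply, map_add, char_real_smul, char_real_smul, map_one, mul_one]

theorem isUnit_hatA (a : A) (ha : ∀ φ : A →ₐ[ℂ] ℂ, (φ a).im ≠ 0) {z : ℂ} (hz : z ≠ 0) :
    IsUnit (hatA a z) := by
  apply isUnit_of_char
  intro φ h
  rw [char_hatA] at h
  have h1 := congrArg Complex.im h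
  have h2 := congrArg Complex.re h
  simp [ha φ] at h1 
  simp [h1] at h2
  exact hz (Complex.ext h2 h1)

/-- Differentiation under the integral sign. -/
theorem diff_under (F : ℝ → ℂ → A) (F' : ℂ → A) (x₀ : ℝ) (s : Set ℝ) (hs : s ∈ 𝓝 x₀)
    (bound : ℂ → ℝ)
    (hF : ∀ x, AEStronglyMeasurable (F x) volume) (hinteg : Integrable (F x₀))
    (hlip : ∀ q, LipschitzOnWith (Real.nnabs (bound q)) (F · q) s)
    (hb : Integrable bound) (hd : ∀ q, HasDerivAt (F · q) (F' q) x₀) :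
    HasDerivAt (fun x => ∫ q, F x q) (∫ q, F' q) x₀ := by
  refine (hasDerivAt_integral_of_dominated_loc_of_lip hs (Eventually.of_forall hF) hinteg ?_
    (ae_of_all _ hlip) hb (ae_of_all _ hd)).2
  have hseq : Tendsto (fun n : ℕ => (1 : ℝ) / ((n : ℝ) + 1)) atTop (𝓝[≠] 0) := by
    rw [tendsto_nhdsWithin_iff]
    refine ⟨tendsto_one_div_add_atTop_nhds_zero_nat, Eventually.of_forall fun n => ?_⟩
    have : (1 : ℝ) / ((n : ℝ) + 1) > 0 := by positivity
    exact this.ne'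
  refine aestronglyMeasurable_of_tendsto_ae (u := atTop)
    (f := fun n : ℕ => fun q => ((1 : ℝ) / ((n : ℝ) + 1))⁻¹ •
      (F (x₀ + (1 : ℝ) / ((n : ℝ) + 1)) q - F x₀ q)) ?_ ?_
  · intro n
    exact ((hF _).sub (hF _)).const_smul _
  · refine ae_of_all _ fun q => ?_
    exact ((hasDerivAt_iff_tendsto_slope_zero.1 (hd q)).comp hseq)

/-- A Lipschitz function with a line derivative is differentiable along tangent curves. -/
theorem lip_curve {f : ℂ → A} {p v : ℂ} {L : A} {K : NNReal} {U : Set ℂ} (hU : U ∈ 𝓝 p)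
    (hf : LipschitzOnWith K f U) (hl : HasDerivAt (fun t : ℝ => f (p + t • v)) L 0)
    (γ : ℝ → ℂ) (x₀ : ℝ) (h0 : γ x₀ = p) (hγ : HasDerivAt γ v x₀) :
    HasDerivAt (fun t => f (γ t)) L x₀ := by
  have hl' : HasDerivAt (fun t : ℝ => f (p + (t - x₀) • v)) L x₀ := by
    have := HasDerivAt.scomp_of_eq (g₁ := fun t : ℝ => f (p + t • v)) (h := fun t : ℝ => t - x₀)
      (x := x₀) (h' := 1) (by exact hl) ((hasDerivAt_id x₀).sub_const x₀) (by simp)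
    simpa [Function.comp_def] using this
  have key : HasDerivAt (fun t => f (γ t) - f (p + (t - x₀) • v)) 0 x₀ := by
    rw [hasDerivAt_iff_isLittleO]
    have e : γ x₀ = p + (x₀ - x₀) • v := by simp [h0]
    have hO : (fun t => f (γ t) - f (p + (t - x₀) • v)) =O[𝓝 x₀]
        (fun t => γ t - (p + (t - x₀) • v)) := by
      refine Asymptotics.IsBigO.of_bound K ?_
      have c1 : ∀ᶠ t in 𝓝 x₀, γ t ∈ U := hγ.continuousAt (by rw [h0]; exact hU)
      have c2 : ∀ᶠ t : ℝ in 𝓝 x₀, p + (t - x₀) • v ∈ U := by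
        have : ContinuousAt (fun t : ℝ => p + (t - x₀) • v) x₀ := by fun_prop
        exact this (by simpa using hU)
      filter_upwards [c1, c2] with t h1 h2
      exact hf.norm_sub_le h1 h2
    have hlo := hasDerivAt_iff_isLittleO.1 hγ
    have : (fun t => γ t - (p + (t - x₀) • v)) = fun t => γ t - γ x₀ - (t - x₀) • v := by
      funext t; rw [h0]; ring
    rw [this] at hO
    refine (hO.trans_isLittleO hlo).congr_left ?_
    intro t
    simp [h0]
  have := key.fun_add hl'
  simpa using this

end kernel
section kernel2

variable {A : Type*} [NormedCommRing A] [NormedAlgebra ℂ A] [FiniteDimensional ℂ A]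

/-- A bump function on the line. -/
noncomputable def rhoBump : ContDiffBump (1 / 2 : ℝ) := ⟨1 / 8, 1 / 4, by norm_num, by norm_num⟩

/-- A radial weight supported in an annulus. -/
noncomputable def rhoW (q : ℂ) : ℝ := rhoBump (Complex.normSq q)

theorem rhoW_contDiff : ContDiff ℝ 1 rhoW := by
  have h1 : ContDiff ℝ 1 (rhoBump : ℝ → ℝ) := rhoBump.contDiff
  have h2 : ContDiff ℝ 1 (fun q : ℂ => Complex.normSq q) := by
    have : (fun q : ℂ => Complex.normSq q) = fun q => Complex.reCLM q * Complex.reCLM q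
        + Complex.imCLM q * Complex.imCLM q := by
      funext q; simp [Complex.normSq_apply]
    rw [this]
    fun_prop
  exact h1.comp h2

theorem rhoW_nonneg (q : ℂ) : 0 ≤ rhoW q := rhoBump.nonneg

theorem rhoW_zero_of_norm {q : ℂ} (hq : 1 ≤ ‖q‖ ∨ ‖q‖ ≤ 1 / 2) : rhoW q = 0 := by
  apply rhoBump.zero_of_le_dist
  rw [Complex.normSq_eq_norm_sq, Real.dist_eq]
  show (1 / 4 : ℝ) ≤ _
  rcases hq with h | h
  · refine le_trans ?_ (le_abs_self _)
    nlinarith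
  · refine le_trans ?_ (neg_le_abs _)
    nlinarith [norm_nonneg q]

theorem rhoW_rot (q : ℂ) (θ : ℝ) : rhoW (Complex.exp (θ * Complex.I) * q) = rhoW q := by
  simp [rhoW, Complex.normSq_eq_norm_sq, Complex.norm_exp_ofReal_mul_I]

/-- The unnormalised kernel. -/
noncomputable def ker0 (a : A) (q : ℂ) : A :=
  rhoW q • (hatA a (Complex.I * q) * Ring.inverse (hatA a q))

theorem ker0_zero (a : A) {q : ℂ} (hq : 1 ≤ ‖q‖ ∨ ‖q‖ ≤ 1 / 2) : ker0 a q = 0 := by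
  simp [ker0, rhoW_zero_of_norm hq]

theorem ker0_mul (a : A) (ha : ∀ φ : A →ₐ[ℂ] ℂ, (φ a).im ≠ 0) (q : ℂ) :
    ker0 a q * hatA a q = rhoW q • hatA a (Complex.I * q) := by
  by_cases h : q = 0
  · subst h; simp
  · rw [ker0, smul_mul_assoc, mul_assoc, Ring.inverse_mul_cancel _ (isUnit_hatA a ha h), mul_one]

theorem ker0_contDiff (a : A) (ha : ∀ φ : A →ₐ[ℂ] ℂ, (φ a).im ≠ 0) : ContDiff ℝ 1 (ker0 a) := by
  have : CompleteSpace A := FiniteDimensional.complete ℂ A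
  rw [contDiff_iff_contDiffAt]
  intro q
  by_cases h : q = 0
  · subst h
    have : ker0 a =ᶠ[𝓝 0] fun _ => (0 : A) := by
      filter_upwards [Metric.ball_mem_nhds (0 : ℂ) (by norm_num : (0 : ℝ) < 1 / 2)] with z hz
      rw [mem_ball_zero_iff] at hz
      exact ker0_zero a (Or.inr hz.le)
    exact contDiffAt_const.congr_of_eventuallyEq this
  · unfold ker0
    refine rhoW_contDiff.contDiffAt.smul (ContDiffAt.mul ?_ ?_)
    · have : ContDiff ℝ 1 (fun q : ℂ => hatA a (Complex.I * q)) :=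
        (hatA a).contDiff.comp (contDiff_const.mul contDiff_id)
      exact this.contDiffAt
    · obtain ⟨u, hu⟩ := isUnit_hatA a ha h
      have h1 : ContDiffAt ℝ 1 (Ring.inverse : A → A) (hatA a q) := by
        rw [← hu]; exact contDiffAt_ringInverse ℝ u
      exact h1.comp q (hatA a).contDiff.contDiffAt

theorem ker0_compact (a : A) : HasCompactSupport (ker0 a) := by
  refine HasCompactSupport.intro (isCompact_closedBall (0 : ℂ) 1) ?_
  intro q hq
  rw [mem_closedBall_zero_iff, not_le] at hq
  exact ker0_zero a (Or.inl hq.le)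

theorem ker0_unit (a : A) (ha : ∀ φ : A →ₐ[ℂ] ℂ, (φ a).im ≠ 0) : IsUnit (∫ q, ker0 a q) := by
  have : CompleteSpace A := FiniteDimensional.complete ℂ A
  apply isUnit_of_char
  intro φ h0
  let ψ : A →L[ℂ] ℂ := φ.toLinearMap.toContinuousLinearMap
  have hψ : ∀ x, ψ x = φ x := fun x => rfl
  let χ : A →L[ℝ] ℝ := Complex.imCLM.comp (ψ.restrictScalars ℝ)
  have hχ : ∀ x, χ x = (φ x).im := fun x => rfl
  have hc := (ker0_contDiff a ha).continuous
  have hi : Integrable (ker0 a) := hc.integrable_of_hasCompactSupport (ker0_compact a)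
  have e1 : ∫ q, χ (ker0 a q) = 0 := by
    rw [χ.integral_comp_comm hi, hχ, h0]; rfl
  have form : ∀ q : ℂ, (φ a).im * χ (ker0 a q) * Complex.normSq (q.re + q.im * φ a) =
      rhoW q * ((φ a).im ^ 2 * Complex.normSq q) := by
    intro q
    have h1 := congrArg φ (ker0_mul a ha q)
    rw [map_mul, char_real_smul, char_hatA, char_hatA] at h1
    have h2 : φ (ker0 a q) * (Complex.normSq (q.re + q.im * φ a) : ℂ) =
        (rhoW q : ℂ) * (((Complex.I * q).re : ℂ) + ((Complex.I * q).im : ℂ) * φ a) *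
          (starRingEnd ℂ) (q.re + q.im * φ a) := by
      rw [← h1, ← Complex.mul_conj]; ring
    have h3 := congrArg Complex.im h2
    rw [Complex.im_mul_ofReal] at h3
    rw [hχ, mul_assoc, h3, mul_assoc, Complex.re_ofReal_mul |> fun _ => Complex.im_ofReal_mul]
    simp [Complex.normSq_apply]
    ring
  have npos : ∀ q : ℂ, q ≠ 0 → 0 < Complex.normSq ((q.re : ℂ) + q.im * φ a) := by
    intro q hq
    rw [Complex.normSq_pos, ← char_hatA]
    exact ((isUnit_hatA a ha hq).map φ).ne_zero
  have e2 : 0 < ∫ q, (φ a).im * χ (ker0 a q) := by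
    refine Continuous.integral_pos_of_hasCompactSupport_nonneg_nonzero
      (f := fun q => (φ a).im * χ (ker0 a q)) (x := (Real.sqrt (1 / 2) : ℂ)) ?_ ?_ ?_ ?_
    · exact continuous_const.mul (χ.continuous.comp hc)
    · refine HasCompactSupport.intro (isCompact_closedBall (0 : ℂ) 1) ?_
      intro q hq
      rw [mem_closedBall_zero_iff, not_le] at hq
      simp [ker0_zero a (Or.inl hq.le)]
    · intro q
      by_cases hq : q = 0
      · subst hq; simp [ker0_zero]
      · have := form q
        have hp := npos q hq
        have hr : 0 ≤ rhoW q * ((φ a).im ^ 2 * Complex.normSq q) :=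
          mul_nonneg (rhoW_nonneg q) (mul_nonneg (sq_nonneg _) (Complex.normSq_nonneg _))
        rw [← this] at hr
        exact nonneg_of_mul_nonneg_left hr hp
    · intro hz
      have := form (Real.sqrt (1 / 2) : ℂ)
      rw [hz, zero_mul] at this
      have hn : Complex.normSq (Real.sqrt (1 / 2) : ℂ) = 1 / 2 := by
        rw [Complex.normSq_ofReal, Real.mul_self_sqrt (by norm_num)]
      have hr : rhoW (Real.sqrt (1 / 2) : ℂ) = 1 := by
        rw [rhoW, hn]
        apply rhoBump.one_of_mem_closedBall
        simp [rhoBump]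
      rw [hn, hr] at this
      have := sq_pos_of_ne_zero (ha φ)
      linarith
  rw [integral_const_mul, e1] at e2
  simp at e2

end kernel2
section kernel3

variable {A : Type*} [NormedCommRing A] [NormedAlgebra ℂ A] [FiniteDimensional ℂ A]

theorem weight_integrable (κ : ℂ → A) (hκ : Continuous κ) (hκc : HasCompactSupport κ)
    (hκ0 : ∀ q, 1 ≤ ‖q‖ → κ q = 0) (f : ℂ → A) (hm : StronglyMeasurable f)
    {w : ℂ} {d M : ℝ} (hM : ∀ z ∈ closedBall w d, ‖f z‖ ≤ M)
    (γ : ℂ → ℂ) (hγm : Measurable γ) (hγ : ∀ q, ‖q‖ < 1 → γ q ∈ closedBall w d) :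
    Integrable (fun q => κ q * f (γ q)) := by
  have hi : Integrable κ := hκ.integrable_of_hasCompactSupport hκc
  refine Integrable.mono' (hi.norm.mul_const M) ?_ (ae_of_all _ fun q => ?_)
  · exact hκ.aestronglyMeasurable.mul (hm.comp_measurable hγm).aestronglyMeasurable
  · by_cases h : 1 ≤ ‖q‖
    · simp [hκ0 q h]
    · exact (norm_mul_le _ _).trans
        (mul_le_mul_of_nonneg_left (hM _ (hγ q (not_le.1 h))) (norm_nonneg _))

theorem diff_weight (a : A) (κ : ℂ → A) (hκ : Continuous κ) (hκc : HasCompactSupport κ)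
    (hκ0 : ∀ q, 1 ≤ ‖q‖ → κ q = 0) (f : ℂ → A) (hm : StronglyMeasurable f)
    {w : ℂ} {d : ℝ} {K : NNReal} (hd : 0 < d) (hlip : LipschitzOnWith K f (closedBall w d))
    (gg : ℂ → A)
    (hg : ∀ z ∈ ball w d, ∀ h : ℂ, HasDerivAt (fun t : ℝ => f (z + t • h)) (hatA a h * gg z) 0)
    (γ : ℝ → ℂ → ℂ) (x₀ : ℝ) (s : Set ℝ) (hs : s ∈ 𝓝 x₀) (hγm : ∀ x, Measurable (γ x))
    (hγ : ∀ x ∈ s, ∀ q, ‖q‖ < 1 → γ x q ∈ ball w d) (C : ℝ) (hC : 0 ≤ C)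
    (hγl : ∀ x y q, ‖q‖ < 1 → ‖γ x q - γ y q‖ ≤ C * ‖x - y‖)
    (v : ℂ → ℂ) (hv : ∀ q, HasDerivAt (fun x => γ x q) (v q) x₀) :
    HasDerivAt (fun x => ∫ q, κ q * f (γ x q)) (∫ q, κ q * (hatA a (v q) * gg (γ x₀ q))) x₀ := by
  have hi : Integrable κ := hκ.integrable_of_hasCompactSupport hκc
  have hx₀ : x₀ ∈ s := mem_of_mem_nhds hs
  have hbd : ∀ z ∈ closedBall w d, ‖f z‖ ≤ ‖f w‖ + K * d := by
    intro z hz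
    have h1 := hlip.norm_sub_le hz (mem_closedBall_self hd.le)
    have h2 : ‖z - w‖ ≤ d := by simpa [dist_eq_norm] using hz
    have h3 : (K : ℝ) * ‖z - w‖ ≤ K * d := mul_le_mul_of_nonneg_left h2 K.2
    have h4 := norm_sub_norm_le (f z) (f w)
    linarith
  refine diff_under (fun x q => κ q * f (γ x q)) _ x₀ s hs (fun q => ‖κ q‖ * (K * C)) ?_ ?_ ?_ ?_ ?_
  · intro x
    exact hκ.aestronglyMeasurable.mul (hm.comp_measurable (hγm x)).aestronglyMeasurable
  · exact weight_integrable κ hκ hκc hκ0 f hm hbd (γ x₀) (hγm x₀)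
      fun q hq => ball_subset_closedBall (hγ x₀ hx₀ q hq)
  · intro q
    refine LipschitzOnWith.of_dist_le_mul fun x hx y hy => ?_
    rw [dist_eq_norm, dist_eq_norm, Real.coe_nnabs,
      abs_of_nonneg (by positivity : 0 ≤ ‖κ q‖ * (K * C))]
    by_cases h : 1 ≤ ‖q‖
    · simp [hκ0 q h]
    · have h' := not_le.1 h
      rw [← mul_sub]
      refine (norm_mul_le _ _).trans ?_
      rw [mul_assoc]
      refine mul_le_mul_of_nonneg_left ?_ (norm_nonneg _)
      refine (hlip.norm_sub_le (ball_subset_closedBall (hγ x hx q h'))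
        (ball_subset_closedBall (hγ y hy q h'))).trans ?_
      rw [mul_assoc]
      exact mul_le_mul_of_nonneg_left (hγl x y q h') K.2
  · exact hi.norm.mul_const _
  · intro q
    by_cases h : 1 ≤ ‖q‖
    · simp only [hκ0 q h, zero_mul]
      exact hasDerivAt_const _ _
    · have h' := hγ x₀ hx₀ q (not_le.1 h)
      exact (lip_curve (Filter.mem_of_superset (isOpen_ball.mem_nhds h') ball_subset_closedBall)
        hlip (hg _ h' (v q)) (fun x => γ x q) x₀ rfl (hv q)).const_mul (κ q)

theorem rot_lip (x y : ℝ) (q : ℂ) (hq : ‖q‖ < 1) :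
    ‖Complex.exp (x * Complex.I) * q - Complex.exp (y * Complex.I) * q‖ ≤ ‖x - y‖ := by
  have : Complex.exp (x * Complex.I) * q - Complex.exp (y * Complex.I) * q =
      Complex.exp (y * Complex.I) * (Complex.exp (Complex.I * ((x - y : ℝ) : ℂ)) - 1) * q := by
    rw [mul_sub, ← Complex.exp_add]
    push_cast
    ring_nf
  rw [this, norm_mul, norm_mul, Complex.norm_exp_ofReal_mul_I, one_mul]
  have h1 := Real.norm_exp_I_mul_ofReal_sub_one_le (x := x - y)
  nlinarith [norm_nonneg q, norm_nonneg (x - y),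
    norm_nonneg (Complex.exp (Complex.I * ((x - y : ℝ) : ℂ)) - 1)]

theorem rot_integral (θ : ℝ) (F : ℂ → A) :
    ∫ q, F (Complex.exp (θ * Complex.I) * q) = ∫ q, F q := by
  have h := (LinearIsometryEquiv.measurePreserving (rotation (Circle.exp θ))).integral_comp
    (rotation (Circle.exp θ)).toHomeomorph.measurableEmbedding F
  simpa [rotation_apply, Circle.coe_exp] using h

theorem repro0 (a : A) (ha : ∀ φ : A →ₐ[ℂ] ℂ, (φ a).im ≠ 0) (f : ℂ → A)
    (hm : StronglyMeasurable f)
    {w : ℂ} {d : ℝ} {K : NNReal} (hd : 0 < d) (hlip : LipschitzOnWith K f (closedBall w d))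
    (hg : ∀ z ∈ ball w d, PlaneDiff a f z) :
    ∫ q, ker0 a q * f (w + d • q) = (∫ q, ker0 a q) * f w := by
  have : CompleteSpace A := FiniteDimensional.complete ℂ A
  choose! gg hgg using hg
  have hκ := (ker0_contDiff a ha).continuous
  have hκc := ker0_compact a
  have hκ0 : ∀ q, 1 ≤ ‖q‖ → ker0 a q = 0 := fun q hq => ker0_zero a (Or.inl hq)
  have hi : Integrable (ker0 a) := hκ.integrable_of_hasCompactSupport hκc
  have hbd : ∀ z ∈ closedBall w d, ‖f z‖ ≤ ‖f w‖ + K * d := by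
    intro z hz
    have h1 := hlip.norm_sub_le hz (mem_closedBall_self hd.le)
    have h2 : ‖z - w‖ ≤ d := by simpa [dist_eq_norm] using hz
    have h3 : (K : ℝ) * ‖z - w‖ ≤ K * d := mul_le_mul_of_nonneg_left h2 K.2
    have h4 := norm_sub_norm_le (f z) (f w)
    linarith
  set G : ℝ → A := fun s => ∫ q, ker0 a q * f (w + s • q) with hG
  have hmem : ∀ s ∈ Icc 0 d, ∀ q : ℂ, ‖q‖ < 1 → w + s • q ∈ closedBall w d := by
    intro s hs q hq
    rw [mem_closedBall, dist_eq_norm, add_sub_cancel_left, norm_smul, Real.norm_of_nonneg hs.1]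
    nlinarith [hs.1, hs.2]
  have hmem' : ∀ s ∈ Ioo 0 d, ∀ q : ℂ, ‖q‖ < 1 → w + s • q ∈ ball w d := by
    intro s hs q hq
    rw [mem_ball, dist_eq_norm, add_sub_cancel_left, norm_smul, Real.norm_of_nonneg hs.1.le]
    nlinarith [hs.1, hs.2]
  have hinteg : ∀ s ∈ Icc 0 d, Integrable (fun q => ker0 a q * f (w + s • q)) := fun s hs =>
    weight_integrable _ hκ hκc hκ0 f hm hbd (fun q => w + s • q) (by fun_prop) (hmem s hs)
  -- Lipschitz continuity of `G`
  have hGl : ∀ s ∈ Icc 0 d, ∀ t ∈ Icc 0 d, ‖G s - G t‖ ≤ (∫ q, ‖ker0 a q‖ * (K : ℝ)) * ‖s - t‖ := by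
    intro s hs t ht
    rw [hG]
    simp only
    rw [← integral_sub (hinteg s hs) (hinteg t ht), ← integral_mul_const]
    refine norm_integral_le_of_norm_le ((hi.norm.mul_const _).mul_const _) (ae_of_all _ fun q => ?_)
    by_cases h : 1 ≤ ‖q‖
    · simp [hκ0 q h]
    · have h' := not_le.1 h
      rw [← mul_sub]
      refine (norm_mul_le _ _).trans ?_
      rw [mul_assoc]
      refine mul_le_mul_of_nonneg_left ?_ (norm_nonneg _)
      refine (hlip.norm_sub_le (hmem s hs q h') (hmem t ht q h')).trans ?_
      refine mul_le_mul_of_nonneg_left ?_ K.2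
      rw [add_sub_add_left_eq_sub, ← sub_smul, norm_smul]
      nlinarith [norm_nonneg (s - t)]
  have hGc : ContinuousOn G (Icc 0 d) := by
    have : LipschitzOnWith (Real.toNNReal (∫ q, ‖ker0 a q‖ * (K : ℝ))) G (Icc 0 d) := by
      refine LipschitzOnWith.of_dist_le_mul fun x hx y hy => ?_
      rw [dist_eq_norm, dist_eq_norm, Real.coe_toNNReal _ (integral_nonneg fun q => by positivity)]
      exact hGl x hx y hy
    exact this.continuousOn
  have hG' : ∀ s ∈ Ioo 0 d, HasDerivAt G 0 s := by
    intro s hs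
    have h1 := diff_weight a (ker0 a) hκ hκc hκ0 f hm hd hlip gg hgg (fun x q => w + x • q) s
      (Ioo 0 d) (Ioo_mem_nhds hs.1 hs.2) (fun x => by fun_prop) hmem' 1 zero_le_one
      (by
        intro x y q hq
        rw [add_sub_add_left_eq_sub, ← sub_smul, norm_smul]
        nlinarith [norm_nonneg (x - y)]) (fun q => q)
      (by
        intro q
        simpa using ((hasDerivAt_id s).smul_const q).const_add w)
    have h2 := diff_weight a (fun q => rhoW q • (1 : A))
      (rhoW_contDiff.continuous.smul continuous_const)
      (by
        refine HasCompactSupport.intro (isCompact_closedBall (0 : ℂ) 1) ?_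
        intro q hq
        rw [mem_closedBall_zero_iff, not_le] at hq
        simp [rhoW_zero_of_norm (Or.inl hq.le)])
      (fun q hq => by simp [rhoW_zero_of_norm (Or.inl hq)]) f hm hd hlip gg hgg
      (fun x q => w + s • (Complex.exp (x * Complex.I) * q)) 0 univ univ_mem
      (fun x => by fun_prop)
      (by
        intro x _ q hq
        refine hmem' s hs _ ?_
        simpa [Complex.norm_exp_ofReal_mul_I] using hq) s hs.1.le
      (by
        intro x y q hq
        rw [add_sub_add_left_eq_sub, ← smul_sub, norm_smul, Real.norm_of_nonneg hs.1.le]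
        exact mul_le_mul_of_nonneg_left (rot_lip x y q hq) hs.1.le)
      (fun q => s • (Complex.I * q))
      (by
        intro q
        have e1 : HasDerivAt (fun x : ℝ => (x : ℂ) * Complex.I) Complex.I 0 := by
          simpa using (Complex.ofRealCLM.hasDerivAt (x := (0 : ℝ))).mul_const Complex.I
        have e2 := ((e1.cexp.mul_const q).const_smul s).const_add w
        simpa using e2)
    have h3 : (fun x : ℝ => ∫ q : ℂ, (rhoW q • (1 : A)) *
        f (w + s • (Complex.exp (x * Complex.I) * q))) = fun x : ℝ =>
        ∫ q : ℂ, (rhoW q • (1 : A)) * f (w + s • q) := by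
      funext x
      rw [← rot_integral x (fun q => (rhoW q • (1 : A)) * f (w + s • q))]
      simp only [rhoW_rot]
    rw [h3] at h2
    have h4 := h2.unique (hasDerivAt_const _ _)
    have h5 : ∫ q, ker0 a q * (hatA a q * gg (w + s • q)) = 0 := by
      have h6 : ∀ q : ℂ, rhoW q • (1 : A) * (hatA a (s • (Complex.I * q)) *
          gg (w + s • (Complex.exp ((0 : ℝ) * Complex.I) * q))) =
          s • (ker0 a q * (hatA a q * gg (w + s • q))) := by
        intro q
        rw [← mul_assoc (ker0 a q), ker0_mul a ha, map_smul]
        simp only [Complex.ofReal_zero, zero_mul, Complex.exp_zero, one_mul, smul_mul_assoc]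
        rw [smul_comm]
      simp only [h6] at h4
      rw [integral_smul] at h4
      exact (smul_eq_zero.1 h4).resolve_left hs.1.ne'
    rw [h5] at h1
    exact h1
  have hconst : ∀ s ∈ Ioo 0 d, ‖G d - G s‖ ≤ 0 := by
    intro s hs
    have hsub : Icc s d ⊆ Icc 0 d := Icc_subset_Icc_left hs.1.le
    have := constant_of_has_deriv_right_zero (f := G) (a := s) (b := d) (hGc.mono hsub)
      (fun x hx => (hG' x ⟨hs.1.trans_le hx.1, hx.2⟩).hasDerivWithinAt) d ⟨hs.2.le, le_rfl⟩
    simp [this]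
  have hfin : G d = G 0 := by
    have t1 : Tendsto G (𝓝[>] 0) (𝓝 (G 0)) := by
      have := hGc 0 ⟨le_rfl, hd.le⟩
      refine this.mono_left ?_
      rw [← nhdsWithin_Ioo_eq_nhdsGT hd]
      exact nhdsWithin_mono _ Ioo_subset_Icc_self
    have t2 : Tendsto G (𝓝[>] 0) (𝓝 (G d)) := by
      refine tendsto_const_nhds.congr' ?_
      filter_upwards [Ioo_mem_nhdsGT hd] with s hs
      exact sub_eq_zero.1 (norm_le_zero_iff.1 (hconst s hs))
    exact tendsto_nhds_unique t2 t1
  show G d = _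
  rw [hfin, hG]
  simp only [zero_smul, add_zero]
  have := ((ContinuousLinearMap.mul ℝ A).flip (f w)).integral_comp_comm hi
  simpa [mul_comm] using this

end kernel3
section kernel4

variable {A : Type*} [NormedCommRing A] [NormedAlgebra ℂ A] [FiniteDimensional ℂ A]

theorem PlaneDiff.sub_const {a : A} {f : ℂ → A} {z : ℂ} (h : PlaneDiff a f z) (c : A) :
    PlaneDiff a (fun p => f p - c) z := by
  obtain ⟨g, hg⟩ := h
  exact ⟨g, fun h => (hg h).sub_const c⟩

theorem lip_sub_const {f : ℂ → A} {K : NNReal} {s : Set ℂ} (h : LipschitzOnWith K f s) (c : A) :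
    LipschitzOnWith K (fun p => f p - c) s := by
  refine LipschitzOnWith.of_dist_le_mul fun x hx y hy => ?_
  simpa using h.dist_le_mul x hx y hy

theorem vol_scale (w : ℂ) {d : ℝ} (hd : 0 < d) (s : Set ℂ) {β : ℝ}
    (h : volume s ≤ ENNReal.ofReal (β * d ^ 2)) :
    volume ((fun q : ℂ => w + d • q) ⁻¹' s) ≤ ENNReal.ofReal β := by
  have e : (fun q : ℂ => w + d • q) ⁻¹' s = (fun q : ℂ => d • q) ⁻¹' ((fun q => w + q) ⁻¹' s) := rfl
  rw [e, Measure.addHaar_preimage_smul _ hd.ne', measure_preimage_add, Complex.finrank_real_complex]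
  calc _ ≤ ENNReal.ofReal |(d ^ 2)⁻¹| * ENNReal.ofReal (β * d ^ 2) := by gcongr
    _ = ENNReal.ofReal β := by
      rw [← ENNReal.ofReal_mul (abs_nonneg _), abs_of_pos (by positivity)]
      congr 1
      field_simp

theorem kernel_est1 (a : A) (ha : ∀ φ : A →ₐ[ℂ] ℂ, (φ a).im ≠ 0) :
    ∃ B : ℝ, 0 < B ∧ ∀ (f : ℂ → A) (w : ℂ) (d : ℝ) (K : NNReal), 0 < d → StronglyMeasurable f →
      LipschitzOnWith K f (closedBall w d) → (∀ z ∈ ball w d, PlaneDiff a f z) →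
      ∀ (c : A) (N S β : ℝ), 0 ≤ N → 0 ≤ S → 0 ≤ β →
        volume {p ∈ ball w d | N < ‖f p - c‖} ≤ ENNReal.ofReal (β * d ^ 2) →
        (∀ p ∈ ball w d, ‖f p - c‖ ≤ S) → ‖f w - c‖ ≤ B * (N + β * S) := by
  obtain ⟨J, hJ⟩ := ker0_unit a ha
  have hκ := (ker0_contDiff a ha).continuous
  obtain ⟨Mk, hMk⟩ := hκ.bounded_above_of_compact_support (ker0_compact a)
  have hMk0 : 0 ≤ Mk := (norm_nonneg _).trans (hMk 0)
  set V : ℝ := volume.real (ball (0 : ℂ) 1) with hV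
  have hV0 : 0 ≤ V := measureReal_nonneg
  set J' := ‖((J⁻¹ : Aˣ) : A)‖ with hJ'
  have hJ'0 : 0 ≤ J' := norm_nonneg _
  refine ⟨J' * Mk * (V + 1) + 1, by positivity, ?_⟩
  intro f w d K hd hm hlip hg c N S β hN hS hβ hvol hbd
  set u : ℂ → A := fun p => f p - c with hu
  have hum : StronglyMeasurable u := hm.sub stronglyMeasurable_const
  have hrep := repro0 a ha u hum hd (lip_sub_const hlip c) (fun z hz => (hg z hz).sub_const c)
  set bad : Set ℂ := (fun q : ℂ => w + d • q) ⁻¹' {p ∈ ball w d | N < ‖f p - c‖} with hbad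
  have hbm : MeasurableSet bad := by
    refine MeasurableSet.preimage ?_ (by fun_prop)
    exact measurableSet_ball.inter (measurableSet_lt measurable_const hum.norm.measurable)
  have hbv : volume bad ≤ ENNReal.ofReal β := vol_scale w hd _ hvol
  have hbv' : volume.real bad ≤ β := ENNReal.toReal_le_of_le_ofReal hβ hbv
  have hbfin : volume bad ≠ ⊤ := ne_top_of_le_ne_top ENNReal.ofReal_ne_top hbv
  have i1 : Integrable (indicator (ball (0 : ℂ) 1) fun _ => Mk * N) :=
    (integrable_indicator_iff measurableSet_ball).2
      (integrableOn_const (measure_ball_lt_top.ne))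
  have i2 : Integrable (indicator bad fun _ => Mk * S) :=
    (integrable_indicator_iff hbm).2 (integrableOn_const hbfin)
  have hle : ‖∫ q, ker0 a q * u (w + d • q)‖ ≤ Mk * (N * V + S * β) := by
    calc ‖∫ q, ker0 a q * u (w + d • q)‖
        ≤ ∫ q, (indicator (ball (0 : ℂ) 1) (fun _ => Mk * N) q + indicator bad (fun _ => Mk * S) q) := by
          refine norm_integral_le_of_norm_le (i1.add i2) (ae_of_all _ fun q => ?_)
          have p1 : 0 ≤ indicator bad (fun _ => Mk * S) q :=
            indicator_nonneg (fun _ _ => by positivity) _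
          have p2 : 0 ≤ indicator (ball (0 : ℂ) 1) (fun _ => Mk * N) q :=
            indicator_nonneg (fun _ _ => by positivity) _
          by_cases hq : 1 ≤ ‖q‖
          · rw [ker0_zero a (Or.inl hq), zero_mul, norm_zero]
            exact add_nonneg p2 p1
          · have hq' : q ∈ ball (0 : ℂ) 1 := by simpa using not_le.1 hq
            have hmem : w + d • q ∈ ball w d := by
              rw [mem_ball, dist_eq_norm, add_sub_cancel_left, norm_smul, Real.norm_of_nonneg hd.le]
              have := not_le.1 hq
              nlinarith
            refine (norm_mul_le _ _).trans ?_
            rw [indicator_of_mem hq'] at p2 ⊢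
            by_cases hb : q ∈ bad
            · rw [indicator_of_mem hb]
              have : ‖ker0 a q‖ * ‖u (w + d • q)‖ ≤ Mk * S :=
                mul_le_mul (hMk q) (hbd _ hmem) (norm_nonneg _) hMk0
              linarith
            · have hN' : ‖u (w + d • q)‖ ≤ N := by
                by_contra hcon
                exact hb ⟨hmem, not_le.1 hcon⟩
              have : ‖ker0 a q‖ * ‖u (w + d • q)‖ ≤ Mk * N :=
                mul_le_mul (hMk q) hN' (norm_nonneg _) hMk0
              linarith
      _ = V * (Mk * N) + volume.real bad * (Mk * S) := by
          rw [integral_add i1 i2, integral_indicator_const _ measurableSet_ball,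
            integral_indicator_const _ hbm, smul_eq_mul, smul_eq_mul]
      _ ≤ V * (Mk * N) + β * (Mk * S) := by gcongr
      _ = Mk * (N * V + S * β) := by ring
  have hw : u w = (J⁻¹ : Aˣ) * ∫ q, ker0 a q * u (w + d • q) := by
    rw [hrep, ← hJ, ← mul_assoc, Units.inv_mul, one_mul]
  calc ‖f w - c‖ = ‖u w‖ := rfl
    _ ≤ J' * (Mk * (N * V + S * β)) := by
        rw [hw]
        exact (norm_mul_le _ _).trans (mul_le_mul_of_nonneg_left hle hJ'0)
    _ ≤ (J' * Mk * (V + 1) + 1) * (N + β * S) := by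
        have : 0 ≤ β * S := by positivity
        have h1 : 0 ≤ J' * Mk := by positivity
        nlinarith [mul_nonneg h1 hN, mul_nonneg h1 this, mul_nonneg (mul_nonneg h1 this) hV0]

theorem kernel_est2 (a : A) (ha : ∀ φ : A →ₐ[ℂ] ℂ, (φ a).im ≠ 0) :
    ∃ B : ℝ, 0 < B ∧ ∀ (f : ℂ → A) (w : ℂ) (d : ℝ) (K : NNReal), 0 < d → StronglyMeasurable f →
      LipschitzOnWith K f (closedBall w d) → (∀ z ∈ ball w d, PlaneDiff a f z) →
      ∀ (c : A) (S : ℝ), 0 ≤ S → (∀ p ∈ ball w d, ‖f p - c‖ ≤ S) →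
        ∀ w', ‖w - w'‖ ≤ d / 4 → ‖f w - f w'‖ ≤ B * (S * (‖w - w'‖ / d)) := by
  obtain ⟨J, hJ⟩ := ker0_unit a ha
  have hκ := (ker0_contDiff a ha).continuous
  obtain ⟨C, hC⟩ := ContDiff.lipschitzWith_of_hasCompactSupport (ker0_compact a)
    (ker0_contDiff a ha) (by simp)
  set V : ℝ := volume.real (ball (0 : ℂ) 2) with hV
  have hV0 : 0 ≤ V := measureReal_nonneg
  set J' := ‖((J⁻¹ : Aˣ) : A)‖ with hJ'
  have hJ'0 : 0 ≤ J' := norm_nonneg _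
  refine ⟨J' * C * V * 2 + 1, by positivity, ?_⟩
  intro f w d K hd hm hlip hg c S hS hbd w' hw'
  have hd2 : 0 < d / 2 := by positivity
  set u : ℂ → A := fun p => f p - c with hu
  have hum : StronglyMeasurable u := hm.sub stronglyMeasurable_const
  have hsub1 : closedBall w (d / 2) ⊆ ball w d := closedBall_subset_ball (by linarith)
  have hsub2 : closedBall w' (d / 2) ⊆ ball w d := by
    intro z hz
    rw [mem_ball]
    rw [mem_closedBall] at hz
    have h1 : dist w' w ≤ d / 4 := by rw [dist_comm, dist_eq_norm]; exact hw'
    have := dist_triangle z w' w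
    linarith
  have hulip := lip_sub_const hlip c
  have r1 := repro0 a ha u hum hd2 (hulip.mono (hsub1.trans ball_subset_closedBall))
    (fun z hz => (hg z (hsub1 (ball_subset_closedBall hz))).sub_const c)
  have r2 := repro0 a ha u hum hd2 (hulip.mono (hsub2.trans ball_subset_closedBall))
    (fun z hz => (hg z (hsub2 (ball_subset_closedBall hz))).sub_const c)
  set v : ℂ := (d / 2)⁻¹ • (w - w') with hv
  have hvn : ‖v‖ = 2 * (‖w - w'‖ / d) := by
    rw [hv, norm_smul, Real.norm_of_nonneg (by positivity)]
    field_simp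
  have hvn2 : ‖v‖ ≤ 1 / 2 := by
    rw [hvn]
    have : ‖w - w'‖ / d ≤ 1 / 4 := by rw [div_le_iff₀ hd]; linarith
    linarith
  have hshift : ∀ q : ℂ, w' + (d / 2) • (q + v) = w + (d / 2) • q := by
    intro q
    rw [smul_add, hv, smul_inv_smul₀ hd2.ne']
    ring
  have r3 : ∫ q, ker0 a (q + v) * u (w + (d / 2) • q) = (∫ q, ker0 a q) * u w' := by
    rw [← r2, ← integral_add_right_eq_self (fun q => ker0 a q * u (w' + (d / 2) • q)) v]
    simp only [hshift]
  have hmemq : ∀ q : ℂ, ‖q‖ < 2 → w + (d / 2) • q ∈ ball w d := by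
    intro q hq
    rw [mem_ball, dist_eq_norm, add_sub_cancel_left, norm_smul, Real.norm_of_nonneg hd2.le]
    nlinarith
  have hbd1 : ∀ p ∈ closedBall w (d / 2), ‖u p‖ ≤ S := fun p hp => hbd p (hsub1 hp)
  have hbd2 : ∀ p ∈ closedBall w' (d / 2), ‖u p‖ ≤ S := fun p hp => hbd p (hsub2 hp)
  have hcb : ∀ z : ℂ, ∀ q : ℂ, ‖q‖ < 1 → z + (d / 2) • q ∈ closedBall z (d / 2) := by
    intro z q hq
    rw [mem_closedBall, dist_eq_norm, add_sub_cancel_left, norm_smul, Real.norm_of_nonneg hd2.le]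
    nlinarith
  have I1 : Integrable (fun q => ker0 a q * u (w + (d / 2) • q)) :=
    weight_integrable _ hκ (ker0_compact a) (fun q hq => ker0_zero a (Or.inl hq)) u hum hbd1
      (fun q => w + (d / 2) • q) (by fun_prop) (hcb w)
  have I2 : Integrable (fun q => ker0 a (q + v) * u (w + (d / 2) • q)) := by
    have := weight_integrable _ hκ (ker0_compact a) (fun q hq => ker0_zero a (Or.inl hq)) u hum hbd2
      (fun q => w' + (d / 2) • q) (by fun_prop) (hcb w')
    have := this.comp_add_right v
    simpa only [hshift] using this
  have i1 : Integrable (indicator (ball (0 : ℂ) 2) fun _ => C * ‖v‖ * S) :=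
    (integrable_indicator_iff measurableSet_ball).2
      (integrableOn_const (measure_ball_lt_top.ne))
  have hle : ‖∫ q, (ker0 a q * u (w + (d / 2) • q) - ker0 a (q + v) * u (w + (d / 2) • q))‖
      ≤ V * (C * ‖v‖ * S) := by
    have e : V * (C * ‖v‖ * S) = ∫ q, indicator (ball (0 : ℂ) 2) (fun _ => C * ‖v‖ * S) q := by
      rw [integral_indicator_const _ measurableSet_ball, smul_eq_mul]
    rw [e]
    refine norm_integral_le_of_norm_le i1 (ae_of_all _ fun q => ?_)
    by_cases hq : ‖q‖ < 2
    · rw [indicator_of_mem (by simpa using hq), ← sub_mul]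
      refine (norm_mul_le _ _).trans ?_
      refine mul_le_mul ?_ (hbd _ (hmemq q hq)) (norm_nonneg _) (by positivity)
      have := hC.dist_le_mul q (q + v)
      simpa [dist_eq_norm] using this
    · have hq := not_lt.1 hq
      have h1 : 1 ≤ ‖q + v‖ := by
        have := norm_sub_le (q + v) v
        rw [add_sub_cancel_right] at this
        linarith
      rw [ker0_zero a (Or.inl (by linarith)), ker0_zero a (Or.inl h1)]
      simp only [zero_mul, sub_zero, norm_zero]
      exact indicator_nonneg (fun _ _ => by positivity) _
  rw [integral_sub I1 I2, r1, r3, ← mul_sub, ← hJ] at hle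
  have hw : f w - f w' = (J⁻¹ : Aˣ) * ((J : A) * (u w - u w')) := by
    rw [← mul_assoc, Units.inv_mul, one_mul, hu]
    simp
  calc ‖f w - f w'‖ ≤ J' * (V * (C * ‖v‖ * S)) := by
        rw [hw]
        exact (norm_mul_le _ _).trans (mul_le_mul_of_nonneg_left hle hJ'0)
    _ = J' * C * V * 2 * (S * (‖w - w'‖ / d)) := by rw [hvn]; ring
    _ ≤ _ := by
        have : 0 ≤ S * (‖w - w'‖ / d) := by positivity
        linarith

end kernel4
section baire

variable {A : Type*} [NormedCommRing A] [NormedAlgebra ℂ A] [FiniteDimensional ℂ A]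

/-- Points at which `f` is approximately Lipschitz with constant `n` at scales below `1 / n`. -/
def FSet (f : ℂ → A) (U : Set ℂ) (n ε : ℝ) : Set ℂ :=
  {z ∈ U | ∀ t : ℝ, 0 < t → t ≤ 1 / n →
    volume {p ∈ ball z t | n * t < ‖f p - f z‖} ≤ ENNReal.ofReal (ε * t ^ 2)}

/-- Points near which `f` is Lipschitz. -/
def RegSet (f : ℂ → A) : Set ℂ := {z | ∃ K : NNReal, ∃ s ∈ 𝓝 z, LipschitzOnWith K f s}

theorem vol_unscale (w : ℂ) {d : ℝ} (hd : 0 < d) (s : Set ℂ) {β : ℝ}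
    (h : volume ((fun q : ℂ => w + d • q) ⁻¹' s) ≤ ENNReal.ofReal β) :
    volume s ≤ ENNReal.ofReal (β * d ^ 2) := by
  have e : (fun q : ℂ => w + d • q) ⁻¹' s = (fun q : ℂ => d • q) ⁻¹' ((fun q => w + q) ⁻¹' s) := rfl
  rw [e, Measure.addHaar_preimage_smul _ hd.ne', measure_preimage_add,
    Complex.finrank_real_complex] at h
  have h2 : ENNReal.ofReal (d ^ 2) * ENNReal.ofReal |(d ^ 2)⁻¹| = 1 := by
    rw [← ENNReal.ofReal_mul (by positivity), abs_of_pos (by positivity),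
      mul_inv_cancel₀ (by positivity), ENNReal.ofReal_one]
  calc volume s = ENNReal.ofReal (d ^ 2) * (ENNReal.ofReal |(d ^ 2)⁻¹| * volume s) := by
        rw [← mul_assoc, h2, one_mul]
    _ ≤ ENNReal.ofReal (d ^ 2) * ENNReal.ofReal β := by gcongr
    _ = ENNReal.ofReal (β * d ^ 2) := by
        rw [← ENNReal.ofReal_mul (by positivity), mul_comm]

theorem FSet_exists (a : A) (f : ℂ → A) (hm : StronglyMeasurable f) (U : Set ℂ) {z : ℂ}
    (hz : z ∈ U) (hd : PlaneDiff a f z) {ε : ℝ} (hε : 0 < ε) :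
    ∃ n : ℕ, z ∈ FSet f U (n + 1) ε := by
  obtain ⟨g, hg⟩ := hd
  let Good : ℕ → Set ℂ := fun n => {q ∈ ball (0 : ℂ) 1 | ∀ t : ℝ, 0 < t → t ≤ 1 / ((n : ℝ) + 1) →
    ‖f (z + t • q) - f z‖ ≤ ((n : ℝ) + 1) * t}
  have hmono : Monotone Good := by
    intro n m hnm q hq
    have hnm' : (n : ℝ) ≤ m := by exact_mod_cast hnm
    refine ⟨hq.1, fun t ht ht' => ?_⟩
    refine (hq.2 t ht (ht'.trans ?_)).trans ?_
    · exact one_div_le_one_div_of_le (by positivity) (by linarith)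
    · exact mul_le_mul_of_nonneg_right (by linarith) ht.le
  have hU : ⋃ n, Good n = ball (0 : ℂ) 1 := by
    apply subset_antisymm
    · exact iUnion_subset fun n q hq => hq.1
    · intro q hq
      have hO := (hg q).isBigO_sub
      obtain ⟨C, hC⟩ := hO.bound
      obtain ⟨δ, hδ, hb⟩ := Metric.eventually_nhds_iff.1 hC
      obtain ⟨n, hn⟩ := exists_nat_gt (max C (1 / δ))
      have hn1 : C < n := (le_max_left _ _).trans_lt hn
      have hn2 : 1 / δ < n := (le_max_right _ _).trans_lt hn
      refine mem_iUnion.2 ⟨n, hq, fun t ht ht' => ?_⟩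
      have hn0 : (0 : ℝ) < n := lt_trans (by positivity) hn2
      have htδ : t < δ := by
        have : 1 / ((n : ℝ) + 1) < δ := by
          rw [div_lt_iff₀ (by positivity)]
          rw [div_lt_iff₀ hδ] at hn2
          nlinarith
        linarith
      have := hb (y := t) (by simpa [abs_of_pos ht] using htδ)
      simp only [zero_smul, add_zero, sub_zero, Real.norm_of_nonneg ht.le] at this
      refine this.trans (mul_le_mul_of_nonneg_right (by linarith) ht.le)
  have ht := tendsto_measure_iUnion_atTop (μ := (volume : Measure ℂ)) hmono
  rw [hU] at ht
  have hfin : volume (ball (0 : ℂ) 1) ≠ ⊤ := measure_ball_lt_top.ne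
  have hlt : volume (ball (0 : ℂ) 1) - ENNReal.ofReal ε < volume (ball (0 : ℂ) 1) :=
    ENNReal.sub_lt_self hfin (measure_ball_pos _ _ one_pos).ne'
      (by simpa using hε)
  obtain ⟨n, hn⟩ := (ht.eventually (lt_mem_nhds hlt)).exists
  refine ⟨n, hz, fun t ht ht' => ?_⟩
  apply vol_unscale z ht
  set bad : Set ℂ := (fun q : ℂ => z + t • q) ⁻¹' {p ∈ ball z t | ((n : ℝ) + 1) * t < ‖f p - f z‖}
    with hbad
  have hbm : MeasurableSet bad := by
    refine MeasurableSet.preimage ?_ (by fun_prop)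
    exact measurableSet_ball.inter (measurableSet_lt measurable_const
      (hm.sub stronglyMeasurable_const).norm.measurable)
  have hbs : bad ⊆ ball (0 : ℂ) 1 := by
    intro q hq
    have := hq.1
    rw [mem_ball, dist_eq_norm, add_sub_cancel_left, norm_smul, Real.norm_of_nonneg ht.le] at this
    rw [mem_ball_zero_iff]
    nlinarith
  have hgs : Good n ⊆ ball (0 : ℂ) 1 \ bad := by
    intro q hq
    refine ⟨hq.1, fun h => ?_⟩
    exact absurd (hq.2 t ht ht') (not_le.2 h.2)
  have e1 : volume (ball (0 : ℂ) 1 \ bad) = volume (ball (0 : ℂ) 1) - volume bad :=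
    measure_sdiff hbs hbm.nullMeasurableSet (ne_top_of_le_ne_top hfin (measure_mono hbs))
  have e2 := hn.trans_le (measure_mono hgs)
  rw [e1] at e2
  by_contra hcon
  exact absurd e2 (not_lt.2 (tsub_le_tsub_left (not_le.1 hcon).le _))

theorem FSet_lip (f : ℂ → A) (U : Set ℂ) {n ε : ℝ} (hn : 0 < n) (hε : ε ≤ 1 / 4) {z z' : ℂ}
    (hz : z ∈ FSet f U n ε) (hz' : z' ∈ FSet f U n ε) (hd : ‖z - z'‖ ≤ 1 / n) :
    ‖f z - f z'‖ ≤ 2 * n * ‖z - z'‖ := by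
  by_cases h0 : z = z'
  · simp [h0]
  set t := ‖z - z'‖ with ht
  have htp : 0 < t := norm_pos_iff.2 (sub_ne_zero.2 h0)
  set m : ℂ := (1 / 2 : ℝ) • (z + z') with hm
  have hmz : ‖m - z‖ = t / 2 := by
    have : m - z = (1 / 2 : ℝ) • (z' - z) := by
      rw [hm]; simp only [Complex.real_smul]; push_cast; ring
    rw [this, norm_smul, norm_sub_rev, ← ht]; norm_num; ring
  have hmz' : ‖m - z'‖ = t / 2 := by
    have : m - z' = (1 / 2 : ℝ) • (z - z') := by
      rw [hm]; simp only [Complex.real_smul]; push_cast; ring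
    rw [this, norm_smul, ← ht]; norm_num; ring
  have hb : ball m (t / 2) ⊆ ball z t := by
    intro p hp
    rw [mem_ball, dist_eq_norm] at hp ⊢
    have := norm_add_le (p - m) (m - z)
    rw [sub_add_sub_cancel] at this
    linarith
  have hb' : ball m (t / 2) ⊆ ball z' t := by
    intro p hp
    rw [mem_ball, dist_eq_norm] at hp ⊢
    have := norm_add_le (p - m) (m - z')
    rw [sub_add_sub_cancel] at this
    linarith
  have v1 := hz.2 t htp hd
  have v2 := hz'.2 t htp hd
  have hex : ∃ p ∈ ball m (t / 2), ¬ (n * t < ‖f p - f z‖) ∧ ¬ (n * t < ‖f p - f z'‖) := by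
    by_contra hcon
    push Not at hcon
    have hsub : ball m (t / 2) ⊆ {p ∈ ball z t | n * t < ‖f p - f z‖} ∪
        {p ∈ ball z' t | n * t < ‖f p - f z'‖} := by
      intro p hp
      by_cases h : n * t < ‖f p - f z‖
      · exact Or.inl ⟨hb hp, h⟩
      · exact Or.inr ⟨hb' hp, hcon p hp (not_lt.1 h)⟩
    have h1 := (measure_mono hsub).trans ((measure_union_le _ _).trans (add_le_add v1 v2))
    have h2 : ENNReal.ofReal (ε * t ^ 2) ≤ ENNReal.ofReal (1 / 4 * t ^ 2) :=
      ENNReal.ofReal_le_ofReal (by gcongr)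
    have h3 := h1.trans (add_le_add h2 h2)
    rw [Complex.volume_ball, ← ENNReal.ofReal_add (by positivity) (by positivity),
      ← ENNReal.ofReal_pow (by positivity)] at h3
    have h4 : (NNReal.pi : ENNReal) = ENNReal.ofReal Real.pi := by
      rw [ENNReal.ofReal, ← NNReal.coe_real_pi, Real.toNNReal_coe]
    rw [h4, ← ENNReal.ofReal_mul (by positivity), ENNReal.ofReal_le_ofReal_iff (by positivity)] at h3
    nlinarith [Real.pi_gt_three, sq_nonneg t, pow_pos htp 2]
  obtain ⟨p, -, h1, h2⟩ := hex
  have := norm_sub_le (f p - f z') (f p - f z)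
  rw [sub_sub_sub_cancel_left] at this
  linarith [not_lt.1 h1, not_lt.1 h2]

theorem FSet_mono (f : ℂ → A) (U : Set ℂ) {n m ε : ℝ} (hn : 0 < n) (h : n ≤ m) :
    FSet f U n ε ⊆ FSet f U m ε := by
  intro z hz
  refine ⟨hz.1, fun t ht ht' => ?_⟩
  refine (measure_mono ?_).trans (hz.2 t ht (ht'.trans (one_div_le_one_div_of_le hn h)))
  intro p hp
  refine ⟨hp.1, lt_of_le_of_lt ?_ hp.2⟩
  exact mul_le_mul_of_nonneg_right h ht.le

theorem FSet_closure (a : A) (f : ℂ → A) (hm : StronglyMeasurable f) (U : Set ℂ)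
    (hd : ∀ z ∈ U, PlaneDiff a f z) {n ε : ℝ} (hn : 0 < n) (hε0 : 0 < ε) (hε : ε ≤ 1 / 4) :
    closure (FSet f U n ε) ∩ U ⊆ FSet f U (3 * n) (4 * ε) := by
  rintro z ⟨hzc, hzU⟩
  refine ⟨hzU, fun t ht ht' => ?_⟩
  obtain ⟨m0, hm0⟩ := FSet_exists a f hm U hzU (hd z hzU) hε0
  set m : ℝ := max ((m0 : ℝ) + 1) n with hmdef
  have hmp : 0 < m := lt_of_lt_of_le hn (le_max_right _ _)
  have hzm : z ∈ FSet f U m ε := FSet_mono f U (by positivity) (le_max_left _ _) hm0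
  obtain ⟨z', hz', hzz⟩ := Metric.mem_closure_iff.1 hzc (min t (min (n * t / (2 * m)) (1 / m)))
    (by positivity)
  rw [lt_min_iff, lt_min_iff, dist_eq_norm] at hzz
  obtain ⟨h1, h2, h3⟩ := hzz
  have h4 := FSet_lip f U hmp hε hzm (FSet_mono f U hn (le_max_right _ _) hz') h3.le
  have h5 : ‖f z - f z'‖ ≤ n * t := by
    rw [lt_div_iff₀ (by positivity)] at h2
    linarith
  have h2t : 2 * t ≤ 1 / n := by
    rw [le_div_iff₀ (by positivity)] at ht' ⊢
    nlinarith
  have hv := hz'.2 (2 * t) (by positivity) h2t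
  calc _ ≤ volume {p ∈ ball z' (2 * t) | n * (2 * t) < ‖f p - f z'‖} := by
        apply measure_mono
        rintro p ⟨hp1, hp2⟩
        refine ⟨?_, ?_⟩
        · rw [mem_ball, dist_eq_norm] at hp1 ⊢
          have := norm_add_le (p - z) (z - z')
          rw [sub_add_sub_cancel] at this
          linarith
        · have := norm_sub_le (f p - f z') (f z - f z')
          rw [sub_sub_sub_cancel_right] at this
          linarith
    _ ≤ _ := hv
    _ = _ := by congr 1; ring

theorem RegSet_open (f : ℂ → A) : IsOpen (RegSet f) := by
  rw [isOpen_iff_mem_nhds]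
  rintro z ⟨K, s, hs, hl⟩
  filter_upwards [eventually_mem_nhds_iff.2 hs] with y hy
  exact ⟨K, s, hy, hl⟩

theorem RegSet_compact (f : ℂ → A) {s : Set ℂ} (hs : IsCompact s) (h : s ⊆ RegSet f) :
    ∃ K, LipschitzOnWith K f s := by
  apply LocallyLipschitzOn.exists_lipschitzOnWith_of_compact hs
  intro x hx
  obtain ⟨K, t, ht, hl⟩ := h hx
  exact ⟨K, t, mem_nhdsWithin_of_mem_nhds ht, hl⟩

end baire
section core

variable {A : Type*} [NormedCommRing A] [NormedAlgebra ℂ A] [FiniteDimensional ℂ A]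

theorem near_point (f : ℂ → A) {z : ℂ} (hz : z ∉ RegSet f) {w : ℂ} (hw : w ∈ RegSet f) :
    ∃ δ > 0, ∃ z'' ∉ RegSet f, ‖w - z''‖ = 2 * δ ∧ 2 * δ ≤ ‖w - z‖ ∧
      closedBall w δ ⊆ RegSet f := by
  have hcl : IsClosed (RegSet f)ᶜ := (RegSet_open f).isClosed_compl
  have hne : ((RegSet f)ᶜ).Nonempty := ⟨z, hz⟩
  obtain ⟨z'', hz'', he⟩ := hcl.exists_infDist_eq_dist hne w
  have hpos : 0 < infDist w (RegSet f)ᶜ :=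
    (hcl.notMem_iff_infDist_pos hne).1 (fun h => h hw)
  refine ⟨infDist w (RegSet f)ᶜ / 2, by positivity, z'', hz'', ?_, ?_, ?_⟩
  · rw [← dist_eq_norm, ← he]; ring
  · rw [← dist_eq_norm]
    have := infDist_le_dist_of_mem (x := w) (show z ∈ (RegSet f)ᶜ from hz)
    linarith
  · intro p hp
    by_contra hcon
    have h1 := infDist_le_dist_of_mem (x := w) (show p ∈ (RegSet f)ᶜ from hcon)
    rw [mem_closedBall, dist_comm] at hp
    linarith

theorem core_scale (a : A) (f : ℂ → A) (hm : StronglyMeasurable f) {M : ℝ}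
    (hM : ∀ z, ‖f z‖ ≤ M) (U : Set ℂ) (hd : ∀ z ∈ U, PlaneDiff a f z) {B : ℝ} (hB : 0 < B)
    (hest : ∀ (f : ℂ → A) (w : ℂ) (d : ℝ) (K : NNReal), 0 < d → StronglyMeasurable f →
      LipschitzOnWith K f (closedBall w d) → (∀ z ∈ ball w d, PlaneDiff a f z) →
      ∀ (c : A) (N S β : ℝ), 0 ≤ N → 0 ≤ S → 0 ≤ β →
        volume {p ∈ ball w d | N < ‖f p - c‖} ≤ ENNReal.ofReal (β * d ^ 2) →
        (∀ p ∈ ball w d, ‖f p - c‖ ≤ S) → ‖f w - c‖ ≤ B * (N + β * S))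
    {N ε : ℝ} (hN : 0 < N) (hε0 : 0 < ε) (hε : ε ≤ 1 / 4) (hεB : 54 * B * ε ≤ 1)
    {z₁ : ℂ} {r : ℝ} (hr : 0 < r) (hU : ball z₁ r ⊆ U)
    (hF : ∀ z ∈ ball z₁ r, z ∉ RegSet f → z ∈ FSet f U N ε) {t₀ L : ℝ} (ht₀ : 0 < t₀)
    (ht₁ : t₀ ≤ r / 20) (ht₂ : t₀ ≤ 1 / (3 * N)) (hL1 : 2 * M ≤ L * t₀)
    (hL2 : 2 * (3 * B * N + 4 * N) ≤ L) (j : ℕ) :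
    ∀ z ∈ ball z₁ (r / 2 + 9 * (t₀ * (1 / 3) ^ j)), z ∉ RegSet f → ∀ w,
      ‖w - z‖ ≤ t₀ * (1 / 3) ^ j → ‖f w - f z‖ ≤ L * (t₀ * (1 / 3) ^ j) := by
  have hL0 : 0 < L := lt_of_lt_of_le (by positivity) hL2
  have hN3 : t₀ * (3 * N) ≤ 1 := by rwa [le_div_iff₀ (by positivity)] at ht₂
  induction j with
  | zero =>
    intro z hz hzR w hw
    have := norm_sub_le (f w) (f z)
    simp only [pow_zero, mul_one]
    linarith [hM w, hM z]
  | succ j ih =>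
    set t : ℝ := t₀ * (1 / 3) ^ (j + 1) with ht
    have htj : t₀ * (1 / 3) ^ j = 3 * t := by rw [ht, pow_succ]; ring
    rw [htj] at ih
    have htp : 0 < t := by positivity
    have htt : 3 * t ≤ t₀ := by
      rw [← htj]
      exact mul_le_of_le_one_right ht₀.le (pow_le_one₀ (by norm_num) (by norm_num))
    have htN : 2 * t ≤ 1 / N := by
      rw [le_div_iff₀ hN]; nlinarith
    intro z hz hzR w hw
    rw [mem_ball, dist_eq_norm] at hz
    have hzr : z ∈ ball z₁ r := by rw [mem_ball, dist_eq_norm]; linarith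
    have hzF := hF z hzr hzR
    by_cases hwR : w ∈ RegSet f
    · obtain ⟨δ, hδ, z2, hz2, e1, e2, e3⟩ := near_point f hzR hwR
      have hδt : 2 * δ ≤ t := e2.trans hw
      have d1 : ‖z2 - z‖ ≤ 2 * t := by
        have := norm_sub_le (w - z) (w - z2)
        rw [sub_sub_sub_cancel_left] at this
        linarith
      have d2 : ‖z2 - z₁‖ ≤ ‖z2 - z‖ + ‖z - z₁‖ := norm_sub_le_norm_sub_add_norm_sub _ _ _
      have hz2b : z2 ∈ ball z₁ (r / 2 + 9 * (3 * t)) := by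
        rw [mem_ball, dist_eq_norm]; linarith
      have hz2r : z2 ∈ ball z₁ r := by rw [mem_ball, dist_eq_norm]; linarith
      have hz2F := hF z2 hz2r hz2
      have l1 := FSet_lip f U hN hε hz2F hzF (d1.trans htN)
      obtain ⟨K, hK⟩ := RegSet_compact f (isCompact_closedBall w δ) e3
      have d3 : ‖w - z₁‖ ≤ ‖w - z‖ + ‖z - z₁‖ := norm_sub_le_norm_sub_add_norm_sub _ _ _
      have hpd : ∀ p ∈ ball w δ, ‖p - z2‖ < 3 * δ := by
        intro p hp
        rw [mem_ball, dist_eq_norm] at hp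
        have := norm_sub_le_norm_sub_add_norm_sub p w z2
        linarith
      have l2 := hest f w δ K hδ hm hK (fun p hp => hd p (hU (by
          rw [mem_ball, dist_eq_norm] at hp ⊢
          have := norm_sub_le_norm_sub_add_norm_sub p w z₁
          linarith))) (f z2) (N * (3 * δ)) (L * (3 * t)) (9 * ε) (by positivity) (by positivity)
          (by positivity) (by
            refine (measure_mono ?_).trans ((hz2F.2 (3 * δ) (by positivity) (by
              rw [le_div_iff₀ hN] at htN ⊢
              nlinarith)).trans (le_of_eq (by congr 1; ring)))
            rintro p ⟨hp1, hp2⟩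
            refine ⟨?_, hp2⟩
            rw [mem_ball, dist_eq_norm]
            exact hpd p hp1) (by
            intro p hp
            exact ih z2 hz2b hz2 p (by linarith [hpd p hp]))
      have l3 := norm_sub_le_norm_sub_add_norm_sub (f w) (f z2) (f z)
      have k1 : B * (N * (3 * δ)) ≤ 3 * B * N * t := by
        have : 0 ≤ B * N := by positivity
        nlinarith
      have k2 : B * (9 * ε * (L * (3 * t))) ≤ L / 2 * t := by
        have : 0 ≤ L * t := by positivity
        nlinarith
      have k3 : 2 * N * ‖z2 - z‖ ≤ 4 * N * t := by nlinarith
      have k4 : (3 * B * N + 4 * N) * t ≤ L / 2 * t :=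
        mul_le_mul_of_nonneg_right (by linarith) htp.le
      rw [mul_add] at l2
      linarith
    · have hwr : w ∈ ball z₁ r := by
        rw [mem_ball, dist_eq_norm]
        have := norm_sub_le_norm_sub_add_norm_sub w z z₁
        linarith
      have l1 := FSet_lip f U hN hε (hF w hwr hwR) hzF (by linarith)
      have : 2 * N ≤ L := by
        have : 0 < B * N := by positivity
        nlinarith
      calc _ ≤ _ := l1
        _ ≤ 2 * N * t := by gcongr
        _ ≤ L * t := by gcongr

theorem reg_all (a : A) (ha : ∀ φ : A →ₐ[ℂ] ℂ, (φ a).im ≠ 0) (f : ℂ → A)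
    (hm : StronglyMeasurable f) {M : ℝ}
    (hM : ∀ z, ‖f z‖ ≤ M) (U : Set ℂ) (hUo : IsOpen U) (hd : ∀ z ∈ U, PlaneDiff a f z) :
    U ⊆ RegSet f := by
  obtain ⟨B, hB, hest⟩ := kernel_est1 a ha
  obtain ⟨B₂, hB₂, hest₂⟩ := kernel_est2 a ha
  by_contra hcon
  have hne : (U ∩ (RegSet f)ᶜ).Nonempty := by
    obtain ⟨z, hz, hz'⟩ := not_subset.1 hcon
    exact ⟨z, hz, hz'⟩
  obtain ⟨ε, hε0, hε4, hεB⟩ : ∃ ε : ℝ, 0 < ε ∧ 4 * ε ≤ 1 / 4 ∧ 54 * B * (4 * ε) ≤ 1 := by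
    refine ⟨min (1 / 16) (1 / (216 * B)), by positivity, ?_, ?_⟩
    · linarith [min_le_left (1 / 16 : ℝ) (1 / (216 * B))]
    · have := min_le_right (1 / 16 : ℝ) (1 / (216 * B))
      rw [le_div_iff₀ (by positivity)] at this
      linarith
  -- Baire category
  obtain ⟨N, hN, z₁, hz₁R, r, hr, hrU, hF⟩ : ∃ N : ℝ, 0 < N ∧ ∃ z₁ ∉ RegSet f, ∃ r > 0,
      ball z₁ r ⊆ U ∧ ∀ z ∈ ball z₁ r, z ∉ RegSet f → z ∈ FSet f U N (4 * ε) := by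
    have hlc : IsLocallyClosed (U ∩ (RegSet f)ᶜ) :=
      hUo.isLocallyClosed.inter (RegSet_open f).isClosed_compl.isLocallyClosed
    have : LocallyCompactSpace ↥(U ∩ (RegSet f)ᶜ) := hlc.locallyCompactSpace
    have : Nonempty ↥(U ∩ (RegSet f)ᶜ) := hne.to_subtype
    obtain ⟨n, x, hx⟩ := nonempty_interior_of_iUnion_of_closed
      (X := ↥(U ∩ (RegSet f)ᶜ)) (ι := ℕ)
      (f := fun n => closure (Subtype.val ⁻¹' FSet f U ((n : ℝ) + 1) ε)) (fun n => isClosed_closure)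
      (by
        rw [eq_univ_iff_forall]
        intro x
        obtain ⟨n, hn⟩ := FSet_exists a f hm U x.2.1 (hd _ x.2.1) hε0
        exact mem_iUnion.2 ⟨n, subset_closure hn⟩)
    rw [mem_interior_iff_mem_nhds, Metric.mem_nhds_iff] at hx
    obtain ⟨r1, hr1, hs1⟩ := hx
    obtain ⟨r2, hr2, hs2⟩ := Metric.isOpen_iff.1 hUo x.1 x.2.1
    refine ⟨3 * ((n : ℝ) + 1), by positivity, x.1, x.2.2, min r1 r2, lt_min hr1 hr2,
      (ball_subset_ball (min_le_right _ _)).trans hs2, ?_⟩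
    intro z hz hzR
    have hzU : z ∈ U := hs2 (ball_subset_ball (min_le_right _ _) hz)
    refine FSet_closure a f hm U hd (by positivity) hε0 (by linarith) ⟨?_, hzU⟩
    have h1 : (⟨z, hzU, hzR⟩ : ↥(U ∩ (RegSet f)ᶜ)) ∈
        closure (Subtype.val ⁻¹' FSet f U ((n : ℝ) + 1) ε) :=
      hs1 (ball_subset_ball (min_le_left _ _) hz)
    rw [closure_subtype] at h1
    exact closure_mono (image_preimage_subset _ _) h1
  have hM0 : 0 ≤ M := (norm_nonneg _).trans (hM 0)
  obtain ⟨t₀, ht₀, ht₁, ht₂⟩ : ∃ t₀ : ℝ, 0 < t₀ ∧ t₀ ≤ r / 20 ∧ t₀ ≤ 1 / (3 * N) :=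
    ⟨min (r / 20) (1 / (3 * N)), by positivity, min_le_left _ _, min_le_right _ _⟩
  obtain ⟨L, hL1, hL2⟩ : ∃ L : ℝ, 2 * M ≤ L * t₀ ∧ 2 * (3 * B * N + 4 * N) ≤ L := by
    refine ⟨max (2 * M / t₀) (2 * (3 * B * N + 4 * N)), ?_, le_max_right _ _⟩
    rw [← div_le_iff₀ ht₀]
    exact le_max_left _ _
  have hL0 : 0 < L := lt_of_lt_of_le (by positivity) hL2
  have hsc := core_scale a f hm hM U hd hB hest hN (by positivity) hε4 hεB hr hrU hF ht₀ ht₁ ht₂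
    hL1 hL2
  have claim : ∀ z ∈ ball z₁ (r / 2), z ∉ RegSet f → ∀ w, ‖w - z‖ ≤ t₀ →
      ‖f w - f z‖ ≤ 3 * L * ‖w - z‖ := by
    intro z hz hzR w hw
    by_cases h0 : w = z
    · simp [h0]
    have hp : 0 < ‖w - z‖ := norm_pos_iff.2 (sub_ne_zero.2 h0)
    obtain ⟨j, hj1, hj2⟩ := exists_nat_pow_near_of_lt_one (x := ‖w - z‖ / t₀) (y := (1 / 3 : ℝ))
      (by positivity) (by rw [div_le_one ht₀]; exact hw) (by norm_num) (by norm_num)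
    rw [lt_div_iff₀ ht₀] at hj1
    rw [div_le_iff₀ ht₀] at hj2
    have h1 := hsc j z (ball_subset_ball (by
      have : 0 ≤ t₀ * (1 / 3) ^ j := by positivity
      linarith) hz) hzR w (by linarith)
    rw [pow_succ] at hj1
    refine h1.trans ?_
    nlinarith
  -- Lipschitz near z₁
  set ρ := min (r / 8) (t₀ / 4) with hρ
  have hρ0 : 0 < ρ := by positivity
  have hρ1 : ρ ≤ r / 8 := min_le_left _ _
  have hρ2 : ρ ≤ t₀ / 4 := min_le_right _ _
  set C : ℝ := 9 * B₂ * L + 51 * L with hC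
  have hC0 : 0 ≤ C := by positivity
  have hfin : ∀ w ∈ ball z₁ ρ, ∀ w' ∈ ball z₁ ρ, ‖f w - f w'‖ ≤ C * ‖w - w'‖ := by
    intro w hw w' hw'
    rw [mem_ball, dist_eq_norm] at hw hw'
    have hww : ‖w - w'‖ < 2 * ρ := by
      have := norm_sub_le (w - z₁) (w' - z₁)
      rw [sub_sub_sub_cancel_right] at this
      linarith
    have hn0 : 0 ≤ ‖w - w'‖ := norm_nonneg _
    have hC3 : 3 * L * ‖w - w'‖ ≤ C * ‖w - w'‖ := by
      refine mul_le_mul_of_nonneg_right ?_ hn0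
      have : 0 ≤ B₂ * L := by positivity
      linarith
    by_cases hw'R : w' ∈ RegSet f
    swap
    · exact (claim w' (by rw [mem_ball, dist_eq_norm]; linarith) hw'R w (by linarith)).trans hC3
    by_cases hwR : w ∈ RegSet f
    swap
    · have := claim w (by rw [mem_ball, dist_eq_norm]; linarith) hwR w'
        (by rw [norm_sub_rev]; linarith)
      rw [norm_sub_rev, norm_sub_rev w'] at this
      exact this.trans hC3
    obtain ⟨δ, hδ, z2, hz2, e1, e2, e3⟩ := near_point f hz₁R hwR
    have hz2b : z2 ∈ ball z₁ (r / 2) := by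
      rw [mem_ball, dist_eq_norm]
      have := norm_sub_le (w - z₁) (w - z2)
      rw [sub_sub_sub_cancel_left] at this
      linarith
    by_cases hcase : ‖w - w'‖ ≤ δ / 4
    · obtain ⟨K, hK⟩ := RegSet_compact f (isCompact_closedBall w δ) e3
      have l := hest₂ f w δ K hδ hm hK (fun p hp => hd p (hrU (by
          rw [mem_ball, dist_eq_norm] at hp ⊢
          have := norm_sub_le_norm_sub_add_norm_sub p w z₁
          linarith))) (f z2) (9 * L * δ) (by positivity) (by
          intro p hp
          rw [mem_ball, dist_eq_norm] at hp
          have h3 := norm_sub_le_norm_sub_add_norm_sub p w z2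
          refine (claim z2 hz2b hz2 p (by linarith)).trans ?_
          nlinarith) w' hcase
      refine l.trans ?_
      have : B₂ * (9 * L * δ * (‖w - w'‖ / δ)) = 9 * B₂ * L * ‖w - w'‖ := by
        field_simp
      rw [this, hC, add_mul]
      have : 0 ≤ 51 * L * ‖w - w'‖ := by positivity
      linarith
    · have hcase := not_le.1 hcase
      have h3 : ‖w' - z2‖ ≤ ‖w - w'‖ + 2 * δ := by
        have := norm_sub_le_norm_sub_add_norm_sub w' w z2
        rw [norm_sub_rev w' w] at this
        linarith
      have l1 := claim z2 hz2b hz2 w (by linarith)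
      have l2 := claim z2 hz2b hz2 w' (by linarith)
      have l3 := norm_sub_le (f w - f z2) (f w' - f z2)
      rw [sub_sub_sub_cancel_right] at l3
      rw [e1] at l1
      have l4 : 3 * L * ‖w' - z2‖ ≤ 3 * L * (‖w - w'‖ + 2 * δ) :=
        mul_le_mul_of_nonneg_left h3 (by positivity)
      have l5 : L * δ ≤ L * (4 * ‖w - w'‖) := mul_le_mul_of_nonneg_left (by linarith) hL0.le
      have : 0 ≤ 9 * B₂ * L * ‖w - w'‖ := by positivity
      rw [hC]
      nlinarith
  refine hz₁R ⟨Real.toNNReal C, ball z₁ ρ, ball_mem_nhds _ hρ0, ?_⟩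
  refine LipschitzOnWith.of_dist_le_mul fun x hx y hy => ?_
  rw [dist_eq_norm, dist_eq_norm, Real.coe_toNNReal _ hC0]
  exact hfin x hx y hy

end core
section finish

variable {A : Type*} [NormedCommRing A] [NormedAlgebra ℂ A] [FiniteDimensional ℂ A]

theorem PlaneDiff.re_cont {a : A} {f : ℂ → A} {x y : ℝ} (h : PlaneDiff a f ⟨x, y⟩) :
    ContinuousAt (fun t : ℝ => f ⟨t, y⟩) x := by
  obtain ⟨g, hg⟩ := h
  have h1 := (hg 1).continuousAt
  have h2 : ContinuousAt (fun t : ℝ => t - x) x := by fun_prop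
  have h3 := ContinuousAt.comp_of_eq h1 h2 (sub_self x)
  convert h3 using 1
  funext t
  simp only [Function.comp]
  congr 1
  apply Complex.ext <;> simp

theorem PlaneDiff.im_cont {a : A} {f : ℂ → A} {x y : ℝ} (h : PlaneDiff a f ⟨x, y⟩) :
    ContinuousAt (fun t : ℝ => f ⟨x, t⟩) y := by
  obtain ⟨g, hg⟩ := h
  have h1 := (hg Complex.I).continuousAt
  have h2 : ContinuousAt (fun t : ℝ => t - y) y := by fun_prop
  have h3 := ContinuousAt.comp_of_eq h1 h2 (sub_self y)
  convert h3 using 1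
  funext t
  simp only [Function.comp]
  congr 1
  apply Complex.ext <;> simp

theorem plane_est (a : A) (ha : ∀ φ : A →ₐ[ℂ] ℂ, (φ a).im ≠ 0) :
    ∃ B : ℝ, 0 < B ∧ ∀ (f : ℂ → A) (s M : ℝ), 0 < s → 0 ≤ M →
      (∀ z : ℂ, |z.re| ≤ s → |z.im| ≤ s → PlaneDiff a f z) →
      (∀ z : ℂ, |z.re| ≤ s → |z.im| ≤ s → ‖f z‖ ≤ M) →
      ∀ w : ℂ, ‖w‖ ≤ s / 8 → ‖f w - f 0‖ ≤ B * (M * (‖w‖ / (s / 2))) := by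
  obtain ⟨B, hB, hest⟩ := kernel_est2 a ha
  refine ⟨B, hB, ?_⟩
  intro f s M hs hM hd hb w hw
  let c : ℝ → ℝ := fun t => max (-s) (min s t)
  have hc : Continuous c := by fun_prop
  have hcs : ∀ t, |c t| ≤ s := fun t => abs_le.2
    ⟨le_max_left _ _, max_le (by linarith) (min_le_left _ _)⟩
  have hci : ∀ t, |t| ≤ s → c t = t := by
    intro t ht
    obtain ⟨h1, h2⟩ := abs_le.1 ht
    simp only [c]
    rw [min_eq_right h2, max_eq_right h1]
  let F : ℂ → A := fun z => f ⟨c z.re, c z.im⟩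
  have hFe : ∀ z : ℂ, |z.re| ≤ s → |z.im| ≤ s → F z = f z := by
    intro z h1 h2
    simp only [F]
    rw [hci _ h1, hci _ h2]
  have hre : ∀ y, |y| ≤ s → Continuous (fun t : ℝ => f ⟨c t, y⟩) := by
    intro y hy
    rw [continuous_iff_continuousAt]
    intro t
    exact ContinuousAt.comp (f := c) (g := fun t : ℝ => f ⟨t, y⟩)
      (hd ⟨c t, y⟩ (hcs t) hy).re_cont hc.continuousAt
  have him : ∀ x, |x| ≤ s → Continuous (fun t : ℝ => f ⟨x, c t⟩) := by
    intro x hx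
    rw [continuous_iff_continuousAt]
    intro t
    exact ContinuousAt.comp (f := c) (g := fun t : ℝ => f ⟨x, t⟩)
      (hd ⟨x, c t⟩ hx (hcs t)).im_cont hc.continuousAt
  have hFm : StronglyMeasurable F := by
    have h1 : StronglyMeasurable (Function.uncurry (fun x y : ℝ => f ⟨c x, c y⟩)) :=
      stronglyMeasurable_uncurry_of_continuous_of_stronglyMeasurable
        (fun y => hre _ (hcs y)) (fun x => (him _ (hcs x)).stronglyMeasurable)
    exact h1.comp_measurable (g := fun z : ℂ => (z.re, z.im))
      (Complex.measurable_re.prodMk Complex.measurable_im)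
  have hFM : ∀ z, ‖F z‖ ≤ M := fun z => hb _ (hcs _) (hcs _)
  have hFd : ∀ z ∈ ball (0 : ℂ) s, PlaneDiff a F z := by
    intro z hz
    rw [mem_ball_zero_iff] at hz
    obtain ⟨g, hg⟩ := hd z ((Complex.abs_re_le_norm z).trans hz.le)
      ((Complex.abs_im_le_norm z).trans hz.le)
    refine ⟨g, fun h => (hg h).congr_of_eventuallyEq ?_⟩
    have h1 : ContinuousAt (fun t : ℝ => z + t • h) 0 := by fun_prop
    have h2 : ∀ᶠ t : ℝ in 𝓝 0, z + t • h ∈ ball (0 : ℂ) s :=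
      h1.eventually_mem (isOpen_ball.mem_nhds (by simpa using hz))
    filter_upwards [h2] with t ht
    rw [mem_ball_zero_iff] at ht
    exact hFe _ ((Complex.abs_re_le_norm _).trans ht.le) ((Complex.abs_im_le_norm _).trans ht.le)
  have hreg := reg_all a ha F hFm hFM (ball 0 s) isOpen_ball hFd
  obtain ⟨K, hK⟩ := RegSet_compact F (isCompact_closedBall (0 : ℂ) (s / 2))
    ((closedBall_subset_ball (by linarith)).trans hreg)
  have := hest F 0 (s / 2) K (by positivity) hFm hK
    (fun z hz => hFd z (ball_subset_ball (by linarith) hz)) 0 M hM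
    (fun p _ => by simpa using hFM p) w (by rw [zero_sub, norm_neg]; linarith)
  rw [zero_sub, norm_neg, norm_sub_rev] at this
  rwa [hFe w ((Complex.abs_re_le_norm _).trans (by linarith))
    ((Complex.abs_im_le_norm _).trans (by linarith)), hFe 0 (by simp [hs.le]) (by simp [hs.le])] at this

/-- uniform Lipschitz property in a direction near a point -/
def LipDir {E : Submodule ℝ A} (Φ : E → A) (ζ₀ h : E) : Prop :=
  ∃ δ > (0 : ℝ), ∃ C ≥ (0 : ℝ), ∀ ζ : E, ‖ζ - ζ₀‖ < δ → ∀ t : ℝ, |t| < δ →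
    ‖Φ (ζ + t • h) - Φ ζ‖ ≤ C * |t|

theorem small_dir {E : Submodule ℝ A} (h : E) {δ : ℝ} (hδ : 0 < δ) :
    ∃ η > 0, η ≤ δ ∧ ∀ ζ ζ₀ : E, ‖ζ - ζ₀‖ < η → ∀ t : ℝ, |t| < η → ‖ζ + t • h - ζ₀‖ < δ := by
  have hp : 0 < ‖h‖ + 1 := by positivity
  have hp1 : 0 < ‖h‖ + 2 := by positivity
  refine ⟨δ / (‖h‖ + 2), by positivity, div_le_self hδ.le (by linarith [norm_nonneg h]), ?_⟩
  intro ζ ζ₀ h1 t ht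
  have h2 : ‖ζ + t • h - ζ₀‖ ≤ ‖ζ - ζ₀‖ + |t| * ‖h‖ := by
    have : ζ + t • h - ζ₀ = (ζ - ζ₀) + t • h := by abel
    rw [this]
    refine (norm_add_le _ _).trans ?_
    rw [norm_smul, Real.norm_eq_abs]
  rw [lt_div_iff₀ hp1] at h1 ht
  nlinarith [norm_nonneg h, norm_nonneg (ζ - ζ₀), abs_nonneg t]

theorem LipDir.add {E : Submodule ℝ A} {Φ : E → A} {ζ₀ h k : E} (hh : LipDir Φ ζ₀ h)
    (hk : LipDir Φ ζ₀ k) : LipDir Φ ζ₀ (h + k) := by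
  obtain ⟨δ, hδ, C, hC, H⟩ := hh
  obtain ⟨δ', hδ', C', hC', H'⟩ := hk
  obtain ⟨η, hη, hle, hs⟩ := small_dir h hδ'
  refine ⟨min δ η, lt_min hδ hη, C + C', by positivity, ?_⟩
  intro ζ hζ t ht
  have h1 := H ζ (hζ.trans_le (min_le_left _ _)) t (ht.trans_le (min_le_left _ _))
  have h2 := H' (ζ + t • h) (hs ζ ζ₀ (hζ.trans_le (min_le_right _ _)) t
    (ht.trans_le (min_le_right _ _))) t (ht.trans_le ((min_le_right _ _).trans hle))
  have e : ζ + t • (h + k) = ζ + t • h + t • k := by rw [smul_add, add_assoc]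
  rw [e]
  have := norm_sub_le_norm_sub_add_norm_sub (Φ (ζ + t • h + t • k)) (Φ (ζ + t • h)) (Φ ζ)
  linarith

theorem LipDir.smul {E : Submodule ℝ A} {Φ : E → A} {ζ₀ h : E} (hh : LipDir Φ ζ₀ h) (c : ℝ) :
    LipDir Φ ζ₀ (c • h) := by
  obtain ⟨δ, hδ, C, hC, H⟩ := hh
  have hp : 0 < |c| + 1 := by positivity
  refine ⟨δ / (|c| + 1), by positivity, C * |c|, by positivity, ?_⟩
  intro ζ hζ t ht
  have hle : δ / (|c| + 1) ≤ δ := div_le_self hδ.le (by linarith [abs_nonneg c])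
  rw [lt_div_iff₀ hp] at ht
  have := H ζ (hζ.trans_le hle) (t * c) (by
    rw [abs_mul]; nlinarith [abs_nonneg t, abs_nonneg c])
  rw [mul_smul, abs_mul] at this
  linarith

theorem gateaux_two_sided {E : Submodule ℝ A} {Φ : E → A} {ζ : E} {g : A}
    (h : GateauxDiffAt Φ ζ g) (v : E) :
    HasDerivAt (fun t : ℝ => Φ (ζ + t • v)) ((v : A) * g) 0 := by
  rw [hasDerivAt_iff_tendsto_slope_zero]
  simp only [zero_add, zero_smul, add_zero]
  rw [← nhdsLT_sup_nhdsGT, tendsto_sup]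
  refine ⟨?_, h v⟩
  have h1 := h (-v)
  have h2 : Tendsto (fun t : ℝ => -t) (𝓝[<] 0) (𝓝[>] 0) := by
    simpa using tendsto_neg_nhdsLT (a := (0 : ℝ))
  have h3 := (h1.comp h2).neg
  have e : -(((-v : E) : A) * g) = (v : A) * g := by simp
  rw [e] at h3
  refine h3.congr ?_
  intro t
  simp [inv_neg]

theorem gateaux_plane {E : Submodule ℝ A} (h1 : (1 : A) ∈ E) {Φ : E → A} (ζ v : E) (z : ℂ)
    (h : ∃ g, GateauxDiffAt Φ (ζ + z.re • ⟨1, h1⟩ + z.im • v) g) :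
    PlaneDiff (v : A) (fun w : ℂ => Φ (ζ + w.re • ⟨1, h1⟩ + w.im • v)) z := by
  obtain ⟨g, hg⟩ := h
  refine ⟨g, fun w => ?_⟩
  have := gateaux_two_sided hg (w.re • ⟨1, h1⟩ + w.im • v)
  rw [hatA_apply]
  convert this using 1
  · funext t
    have e1 : (z + t • w).re = z.re + t * w.re := by simp
    have e2 : (z + t • w).im = z.im + t * w.im := by simp
    beta_reduce
    rw [e1, e2]
    generalize (⟨1, h1⟩ : E) = u
    congr 1
    simp only [add_smul, smul_add, mul_smul]
    abel
  · rfl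

theorem lipDir_generic {E : Submodule ℝ A} (h1 : (1 : A) ∈ E) {Φ : E → A} {Ω : Set E}
    (hΩ : IsOpen Ω) (hlb : IsLocBoundedOn Ω Φ) (hG : ∀ ζ ∈ Ω, ∃ g : A, GateauxDiffAt Φ ζ g)
    {ζ₀ : E} (hζ₀ : ζ₀ ∈ Ω) (v : E) (hv : ∀ φ : A →ₐ[ℂ] ℂ, (φ (v : A)).im ≠ 0) :
    LipDir Φ ζ₀ v := by
  obtain ⟨B, hB, hest⟩ := plane_est (v : A) hv
  obtain ⟨r, hr, M, hM⟩ := hlb ζ₀ hζ₀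
  obtain ⟨r', hr', hsub⟩ := Metric.isOpen_iff.1 hΩ ζ₀ hζ₀
  obtain ⟨η, hη, hηle, hs⟩ := small_dir v (lt_min hr hr')
  obtain ⟨σ, hσ, hσle, hs'⟩ := small_dir (⟨1, h1⟩ : E) hη
  have key : ∀ ζ : E, ‖ζ - ζ₀‖ < σ → ∀ z : ℂ, |z.re| ≤ σ / 2 → |z.im| ≤ σ / 2 →
      ‖ζ + z.re • ⟨1, h1⟩ + z.im • v - ζ₀‖ < min r r' := fun ζ hζ z ha hb =>
    hs _ _ (hs' _ _ hζ _ (by linarith)) _ (by linarith)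
  have keyΩ : ∀ ζ : E, ‖ζ - ζ₀‖ < min r r' → ζ ∈ Ω := fun ζ hζ =>
    hsub (by rw [mem_ball, dist_eq_norm]; exact hζ.trans_le (min_le_right _ _))
  have hM0 : 0 ≤ M := (norm_nonneg _).trans (hM ζ₀ hζ₀ (by simpa using hr))
  refine ⟨σ / 16, by positivity, B * (M * (1 / (σ / 2 / 2))), by positivity, ?_⟩
  intro ζ hζ t ht
  have := hest (fun w : ℂ => Φ (ζ + w.re • ⟨1, h1⟩ + w.im • v)) (σ / 2) M (by positivity) hM0
    (fun z ha hb => gateaux_plane h1 ζ v z (hG _ (keyΩ _ (key ζ (by linarith) z ha hb))))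
    (fun z ha hb => hM _ (keyΩ _ (key ζ (by linarith) z ha hb))
      ((key ζ (by linarith) z ha hb).trans_le (min_le_left _ _))) (t * Complex.I)
    (by simp; linarith)
  simp at this
  refine this.trans (le_of_eq ?_)
  ring

theorem lipDir_all {E : Submodule ℝ A} (h1 : (1 : A) ∈ E) (hC : CondC E) {Φ : E → A} {Ω : Set E}
    (hΩ : IsOpen Ω) (hlb : IsLocBoundedOn Ω Φ) (hG : ∀ ζ ∈ Ω, ∃ g : A, GateauxDiffAt Φ ζ g)
    {ζ₀ : E} (hζ₀ : ζ₀ ∈ Ω) (v : E) : LipDir Φ ζ₀ v := by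
  have hgen := fun v => lipDir_generic h1 hΩ hlb hG hζ₀ v
  let ℓ : (A →ₐ[ℂ] ℂ) → (E →ₗ[ℝ] ℝ) := fun φ =>
    Complex.imLm ∘ₗ (φ.toLinearMap.restrictScalars ℝ) ∘ₗ E.subtype
  have hℓ : ∀ φ x, ℓ φ x = (φ (x : A)).im := fun φ x => rfl
  obtain ⟨h₀, hh₀⟩ : ∃ h₀ : E, ∀ φ : A →ₐ[ℂ] ℂ, (φ (h₀ : A)).im ≠ 0 := by
    by_contra hcon
    push Not at hcon
    obtain ⟨φ, hφ⟩ := Subspace.exists_eq_top_of_iUnion_eq_univ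
      (p := fun φ : A →ₐ[ℂ] ℂ => LinearMap.ker (ℓ φ)) (by
        rw [eq_univ_iff_forall]
        intro x
        obtain ⟨φ, hφ⟩ := hcon x
        exact mem_iUnion.2 ⟨φ, hφ⟩)
    obtain ⟨x, hx⟩ := hC φ Complex.I
    have : x ∈ LinearMap.ker (ℓ φ) := by rw [hφ]; trivial
    rw [LinearMap.mem_ker, hℓ] at this
    simp only at hx
    rw [hx] at this
    simp at this
  have hev : ∀ᶠ t : ℝ in 𝓝 0, ∀ φ : A →ₐ[ℂ] ℂ, (φ ((h₀ + t • v : E) : A)).im ≠ 0 := by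
    rw [eventually_all]
    intro φ
    have hcont : ContinuousAt (fun t : ℝ => ℓ φ h₀ + t * ℓ φ v) 0 := by fun_prop
    filter_upwards [hcont.eventually_ne (y := 0) (by simpa [hℓ] using hh₀ φ)] with t ht
    rw [← hℓ, map_add, map_smul]
    exact ht
  obtain ⟨ε, hε, hball⟩ := Metric.eventually_nhds_iff.1 hev
  have h2 := hgen _ (hball (y := ε / 2) (by
    rw [dist_zero_right, Real.norm_eq_abs, abs_of_pos (by positivity)]; linarith))
  have h3 := ((h2.add ((hgen _ hh₀).smul (-1))).smul (ε / 2)⁻¹)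
  have e : (ε / 2)⁻¹ • (h₀ + (ε / 2) • v + (-1 : ℝ) • h₀) = v := by
    have : h₀ + (ε / 2) • v + (-1 : ℝ) • h₀ = (ε / 2) • v := by module
    rw [this, smul_smul, inv_mul_cancel₀ (by positivity), one_smul]
  rwa [e] at h3

theorem lip_sum {E : Submodule ℝ A} {Φ : E → A} {ζ₀ : E} (H : ∀ v, LipDir Φ ζ₀ v) {ι : Type*}
    (b : ι → E) (s : Finset ι) :
    ∃ δ > (0 : ℝ), ∃ C ≥ (0 : ℝ), ∀ ζ : E, ‖ζ - ζ₀‖ < δ → ∀ (y : ι → ℝ) (r : ℝ), r < δ →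
      (∀ i, |y i| ≤ r) → ‖Φ (ζ + ∑ i ∈ s, y i • b i) - Φ ζ‖ ≤ C * r := by
  classical
  induction s using Finset.induction_on with
  | empty => exact ⟨1, one_pos, 0, le_rfl, by simp⟩
  | insert j s hj ih =>
    obtain ⟨δ', hδ', C', hC', H'⟩ := ih
    obtain ⟨δ, hδ, C, hC, H1⟩ := H (b j)
    obtain ⟨η, hη, hle, hs⟩ := small_dir (b j) hδ'
    refine ⟨min δ η, lt_min hδ hη, C + C', by positivity, ?_⟩
    intro ζ hζ y r hr hy
    have a1 := H1 ζ (hζ.trans_le (min_le_left _ _)) (y j)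
      ((hy j).trans_lt (hr.trans_le (min_le_left _ _)))
    have a2 := H' (ζ + y j • b j) (hs _ _ (hζ.trans_le (min_le_right _ _)) _
      ((hy j).trans_lt (hr.trans_le (min_le_right _ _)))) y r
      (hr.trans_le ((min_le_right _ _).trans hle)) hy
    rw [Finset.sum_insert hj, ← add_assoc]
    have a3 := norm_sub_le_norm_sub_add_norm_sub (Φ (ζ + y j • b j + ∑ i ∈ s, y i • b i))
      (Φ (ζ + y j • b j)) (Φ ζ)
    have a4 := mul_le_mul_of_nonneg_left (hy j) hC
    linarith

theorem cont_of_lip {E : Submodule ℝ A} {Φ : E → A} {ζ₀ : E} (H : ∀ v, LipDir Φ ζ₀ v) :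
    ContinuousAt Φ ζ₀ := by
  haveI : FiniteDimensional ℝ A := FiniteDimensional.complexToReal A
  let b := Module.finBasis ℝ E
  obtain ⟨δ, hδ, C, hC, H⟩ := lip_sum H b Finset.univ
  have hcont : Continuous (fun x : E => (b.equivFun (x - ζ₀) : Fin _ → ℝ)) :=
    (LinearMap.continuous_of_finiteDimensional b.equivFun.toLinearMap).comp
      (g := b.equivFun.toLinearMap) (f := fun x : E => x - ζ₀)
      (continuous_id.sub continuous_const)
  have h0 : Tendsto (fun x : E => ‖(b.equivFun (x - ζ₀) : Fin _ → ℝ)‖) (𝓝 ζ₀) (𝓝 0) := by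
    have := hcont.norm.tendsto ζ₀
    simpa using this
  rw [ContinuousAt, tendsto_iff_norm_sub_tendsto_zero]
  have h2 := h0.const_mul C
  rw [mul_zero] at h2
  refine squeeze_zero' (Eventually.of_forall fun _ => norm_nonneg _) ?_ h2
  filter_upwards [h0.eventually_lt_const hδ] with x hx
  have := H ζ₀ (by simpa using hδ) (b.equivFun (x - ζ₀)) _ hx (fun i => by
    rw [← Real.norm_eq_abs]
    exact norm_le_pi_norm (b.equivFun (x - ζ₀)) i)
  rwa [b.sum_equivFun, add_sub_cancel] at this

end finish


end aux

/-- Under condition (C), a locally bounded, Gâteaux differentiable function on an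
open subset of `E_k` is continuous there. -/
theorem gateaux_locBounded_continuous
    {A : Type*} [NormedCommRing A] [NormedAlgebra ℂ A] [FiniteDimensional ℂ A]
    {k : ℕ} (hk : 2 ≤ k) (e : Fin k → A) (he0 : e ⟨0, by omega⟩ = 1)
    (hli : LinearIndependent ℝ e)
    (hC : CondC (Submodule.span ℝ (Set.range e)))
    (Ω : Set (Submodule.span ℝ (Set.range e))) (hΩ : IsOpen Ω)
    (Φ : Submodule.span ℝ (Set.range e) → A)
    (hlb : IsLocBoundedOn Ω Φ)
    (hG : ∀ ζ ∈ Ω, ∃ g : A, GateauxDiffAt Φ ζ g) :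
    ContinuousOn Φ Ω := by
  intro ζ₀ hζ₀
  have h1 : (1 : A) ∈ Submodule.span ℝ (Set.range e) :=
    he0 ▸ Submodule.subset_span (Set.mem_range_self _)
  exact (cont_of_lip (fun v => lipDir_all h1 hC hΩ hlb hG hζ₀ v)).continuousWithinAt
end

section
/- Suppose condition (C) holds, and let Ω ⊆ E_k be an open connected set such that for every character φ of A and every a ∈ E_k the intersection Ω ∩ (a + M_φ) is path-connected. Let Φ : Ω → A be locally bounded in Ω and differentiable in the sense of Gâteaux at every point of Ω. Then for every character φ of A there exists a function F : ℂ → ℂ which is holomorphic (complex differentiable) on the set φ(Ω) := {φ(ζ) : ζ ∈ Ω} and satisfies F(φ(ζ)) = φ(Φ(ζ)) for all ζ ∈ Ω. -/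
open Filter Topology

open MeasureTheory Set in
lemma tol_isolated_countable (S : Set ℝ) : {x | x ∈ S ∧ ¬ AccPt x (𝓟 S)}.Countable := by
  set T := {x | x ∈ S ∧ ¬ AccPt x (𝓟 S)}
  have hd : DiscreteTopology T := by
    rw [discreteTopology_subtype_iff]
    intro x hx
    have h1 : 𝓝[≠] x ⊓ 𝓟 S = ⊥ := by
      have := hx.2
      rwa [AccPt, not_neBot] at this
    have hTS : T ⊆ S := fun y hy => hy.1
    exact le_bot_iff.mp ((inf_le_inf_left _ (principal_mono.mpr hTS)).trans h1.le)
  exact (HereditarilyLindelofSpace.isLindelof T).countable hd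

open MeasureTheory Set in
lemma tol_line_real (u v : ℝ → ℝ) (a b M : ℝ) (hab : a ≤ b) (hM : 0 ≤ M) (K : Set ℝ)
    (hK : IsClosed K) (hne : (K ∩ Icc a b).Nonempty)
    (hlip : ∀ s ∈ K ∩ Icc a b, ∀ x ∈ Icc a b, |u x - u s| ≤ M * |x - s|)
    (hder : ∀ s ∈ K ∩ Icc a b, HasDerivAt u (v s) s)
    (hv : ∀ x ∈ Icc a b, x ∉ K → v x = 0) :
    |u b - u a - ∫ x in a..b, v x| ≤ M * ∫ x in a..b, Kᶜ.indicator (fun _ => (1:ℝ)) x := by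
  set S := K ∩ Icc a b with hS
  have hl : LipschitzOnWith M.toNNReal u (S ∪ {a, b}) := by
    apply LipschitzOnWith.of_dist_le_mul
    have key : |u b - u a| ≤ M * |b - a| := by
      obtain ⟨s, hs⟩ := hne
      have h1 := hlip s hs a ⟨le_rfl, hab⟩
      have h2 := hlip s hs b ⟨hab, le_rfl⟩
      have h3 := hs.2
      rw [abs_of_nonpos (by linarith [h3.1] : a - s ≤ 0)] at h1
      rw [abs_of_nonneg (by linarith [h3.2] : 0 ≤ b - s)] at h2
      rw [abs_of_nonneg (by linarith : 0 ≤ b - a)]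
      rw [abs_le] at *
      constructor <;> nlinarith [h1.1, h1.2, h2.1, h2.2]
    have ha : a ∈ Icc a b := ⟨le_rfl, hab⟩
    have hb : b ∈ Icc a b := ⟨hab, le_rfl⟩
    intro x hx y hy
    rw [Real.coe_toNNReal _ hM, Real.dist_eq, Real.dist_eq]
    have hx' : x ∈ Icc a b := by
      rcases hx with hx | hx | hx
      · exact hx.2
      · rw [hx]; exact ha
      · rw [hx]; exact hb
    have hy' : y ∈ Icc a b := by
      rcases hy with hy | hy | hy
      · exact hy.2
      · rw [hy]; exact ha
      · rw [hy]; exact hb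
    rcases hy with hy | hy
    · exact hlip y hy x hx'
    rcases hx with hx | hx
    · rw [abs_sub_comm, abs_sub_comm x]; exact hlip x hx y hy'
    rcases hx with rfl | hx <;> rcases hy with rfl | hy
    · simp
    · rw [hy, abs_sub_comm, abs_sub_comm x]; exact key
    · rw [hx]; exact key
    · rw [hx, hy]; simp
  obtain ⟨g, hg, hgu⟩ := hl.extend_real
  have hac : AbsolutelyContinuousOnInterval g a b :=
    (hg.lipschitzOnWith).absolutelyContinuousOnInterval
  have hIg := hac.intervalIntegrable_deriv
  have hftc := hac.integral_deriv_eq_sub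
  have hga : g a = u a := (hgu (by simp)).symm
  have hgb : g b = u b := (hgu (by simp)).symm
  have hvae : ∀ᵐ x, x ∈ uIoc a b → v x = K.indicator (deriv g) x := by
    filter_upwards [hg.ae_differentiableAt_real, (tol_isolated_countable S).ae_notMem volume]
      with x hx hx2 hx3
    rw [uIoc_of_le hab] at hx3
    have hx4 : x ∈ Icc a b := Ioc_subset_Icc_self hx3
    by_cases hxK : x ∈ K
    · rw [indicator_of_mem hxK]
      have hxS : x ∈ S := ⟨hxK, hx4⟩
      have hacc : AccPt x (𝓟 S) := by
        by_contra h; exact hx2 ⟨hxS, h⟩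
      have hU := uniqueDiffWithinAt_iff_accPt.mpr hacc
      refine hU.eq_deriv _ (hder x hxS).hasDerivWithinAt (f := u) ?_
      refine (hx.hasDerivAt.hasDerivWithinAt (s := S)).congr ?_ ?_
      · intro y hy; exact hgu (Or.inl hy)
      · exact hgu (Or.inl hxS)
    · rw [indicator_of_notMem hxK, hv x hx4 hxK]
  rw [intervalIntegral.integral_congr_ae hvae, ← hga, ← hgb, ← hftc]
  have hIg2 : IntervalIntegrable (K.indicator (deriv g)) volume a b := by
    rw [intervalIntegrable_iff] at *
    exact hIg.indicator hK.measurableSet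
  rw [← intervalIntegral.integral_sub hIg hIg2, ← intervalIntegral.integral_const_mul,
    ← Real.norm_eq_abs]
  refine intervalIntegral.norm_integral_le_of_norm_le hab ?_ ?_
  · refine Eventually.of_forall fun x _ => ?_
    have hb := norm_deriv_le_of_lipschitzOn (x₀ := x) univ_mem hg.lipschitzOnWith
    rw [Real.coe_toNNReal _ hM] at hb
    by_cases hx : x ∈ K
    · simp [hx]
    · simpa [hx] using hb
  · rw [intervalIntegrable_iff]
    refine Integrable.const_mul ?_ _
    refine Integrable.indicator ?_ hK.measurableSet.compl
    exact intervalIntegrable_iff.mp intervalIntegrable_const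

open MeasureTheory Set in
lemma tol_line (u v : ℝ → ℂ) (a b M : ℝ) (hab : a ≤ b) (hM : 0 ≤ M) (K : Set ℝ)
    (hK : IsClosed K) (hne : (K ∩ Icc a b).Nonempty)
    (hvi : IntervalIntegrable v volume a b)
    (hlip : ∀ s ∈ K ∩ Icc a b, ∀ x ∈ Icc a b, ‖u x - u s‖ ≤ M * |x - s|)
    (hder : ∀ s ∈ K ∩ Icc a b, HasDerivAt u (v s) s)
    (hv : ∀ x ∈ Icc a b, x ∉ K → v x = 0) :
    ‖u b - u a - ∫ x in a..b, v x‖ ≤ 2 * M * ∫ x in a..b, Kᶜ.indicator (fun _ => (1:ℝ)) x := by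
  have h1 := tol_line_real (fun x => (u x).re) (fun x => (v x).re) a b M hab hM K hK hne
    (fun s hs x hx => by
      have := hlip s hs x hx
      rw [← Complex.sub_re]; exact (Complex.abs_re_le_norm _).trans this)
    (fun s hs => by
      exact (Complex.reCLM.hasFDerivAt.comp_hasDerivAt s (hder s hs)))
    (fun x hx hxK => by simp [hv x hx hxK])
  have h2 := tol_line_real (fun x => (u x).im) (fun x => (v x).im) a b M hab hM K hK hne
    (fun s hs x hx => by
      have := hlip s hs x hx
      rw [← Complex.sub_im]; exact (Complex.abs_im_le_norm _).trans this)
    (fun s hs => by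
      exact (Complex.imCLM.hasFDerivAt.comp_hasDerivAt s (hder s hs)))
    (fun x hx hxK => by simp [hv x hx hxK])
  have e1 : (∫ x in a..b, (v x).re) = (∫ x in a..b, v x).re :=
    Complex.reCLM.intervalIntegral_comp_comm hvi
  have e2 : (∫ x in a..b, (v x).im) = (∫ x in a..b, v x).im :=
    Complex.imCLM.intervalIntegral_comp_comm hvi
  simp only [e1, e2, ← Complex.sub_re, ← Complex.sub_im] at h1 h2
  have := Complex.norm_le_abs_re_add_abs_im (u b - u a - ∫ x in a..b, v x)
  linarith

section tolB
open MeasureTheory Set Function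

lemma tol_ii1 {E : Type*} [NormedAddCommGroup E] [MeasurableSpace E] [BorelSpace E]
    [SecondCountableTopology E] {u : ℝ → E} (hu : Measurable u) {C : ℝ} (hC : ∀ x, ‖u x‖ ≤ C)
    (a b : ℝ) : IntervalIntegrable u volume a b := by
  rw [intervalIntegrable_iff]
  refine Measure.integrableOn_of_bounded (M := C) ?_ hu.aestronglyMeasurable ?_
  · simp
  · exact Eventually.of_forall hC

variable {E : Type*} [NormedAddCommGroup E] [NormedSpace ℝ E] [MeasurableSpace E] [BorelSpace E]
    [SecondCountableTopology E] {g : ℝ → ℝ → E} {C : ℝ}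

lemma tol_iix (hg : Measurable (uncurry g)) (hC : ∀ x y, ‖g x y‖ ≤ C) (y a b : ℝ) :
    IntervalIntegrable (fun x => g x y) volume a b :=
  tol_ii1 (hg.comp (measurable_id.prodMk measurable_const)) (fun x => hC x y) a b

lemma tol_iiy (hg : Measurable (uncurry g)) (hC : ∀ x y, ‖g x y‖ ≤ C) (x a b : ℝ) :
    IntervalIntegrable (fun y => g x y) volume a b :=
  tol_ii1 (hg.comp (measurable_const.prodMk measurable_id)) (fun y => hC x y) a b

lemma tol_swap_meas (hg : Measurable (uncurry g)) : Measurable (uncurry fun x y => g y x) :=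
  hg.comp measurable_swap

lemma tol_iixy (hg : Measurable (uncurry g)) (hC : ∀ x y, ‖g x y‖ ≤ C) (a b c d : ℝ) :
    IntervalIntegrable (fun y => ∫ x in a..b, g x y) volume c d := by
  refine tol_ii1 (C := C * |b - a|) ?_ ?_ c d
  · have h1 : ∀ s : Set ℝ, Measurable fun y => ∫ x in s, g x y := fun s =>
      (StronglyMeasurable.integral_prod_left (μ := volume.restrict s)
        (f := g) hg.stronglyMeasurable).measurable
    simp only [intervalIntegral]
    exact (h1 _).sub (h1 _)
  · intro y
    exact intervalIntegral.norm_integral_le_of_norm_le_const (fun x _ => hC x y)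

lemma tol_fubini (hg : Measurable (uncurry g)) (hC : ∀ x y, ‖g x y‖ ≤ C) (a b c d : ℝ) :
    ∫ x in a..b, ∫ y in c..d, g x y = ∫ y in c..d, ∫ x in a..b, g x y := by
  apply intervalIntegral_intervalIntegral_swap
  refine Measure.integrableOn_of_bounded (M := C) ?_ hg.aestronglyMeasurable ?_
  · rw [Measure.volume_eq_prod, Measure.prod_prod]
    simp [ENNReal.mul_eq_top]
  · exact Eventually.of_forall fun p => hC p.1 p.2

end tolB

/-- Separately continuous bounded function. -/
structure TolSep (f : ℝ → ℝ → ℂ) (C : ℝ) : Prop where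
  cx : ∀ y, Continuous fun x => f x y
  cy : ∀ x, Continuous (f x)
  bd : ∀ x y, ‖f x y‖ ≤ C

/-- Integral over the boundary of a rectangle. -/
noncomputable def tolR (f : ℝ → ℝ → ℂ) (a b c d : ℝ) : ℂ :=
  (∫ x in a..b, f x c) - (∫ x in a..b, f x d) + Complex.I * (∫ y in c..d, f b y)
    - Complex.I * (∫ y in c..d, f a y)

section tolR
open MeasureTheory Set Function
variable {f : ℝ → ℝ → ℂ} {C : ℝ}

lemma TolSep.meas (hf : TolSep f C) : Measurable (uncurry f) :=
  measurable_uncurry_of_continuous_of_measurable hf.cx (fun x => (hf.cy x).measurable)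

lemma TolSep.ix (hf : TolSep f C) (y a b : ℝ) : IntervalIntegrable (fun x => f x y) volume a b :=
  (hf.cx y).intervalIntegrable a b

lemma TolSep.iy (hf : TolSep f C) (x a b : ℝ) : IntervalIntegrable (fun y => f x y) volume a b :=
  (hf.cy x).intervalIntegrable a b

lemma TolSep.addx (hf : TolSep f C) (a b b' c d : ℝ) :
    tolR f a b c d + tolR f b b' c d = tolR f a b' c d := by
  simp only [tolR]
  rw [← intervalIntegral.integral_add_adjacent_intervals (hf.ix c a b) (hf.ix c b b'),
    ← intervalIntegral.integral_add_adjacent_intervals (hf.ix d a b) (hf.ix d b b')]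
  ring

lemma TolSep.addy (hf : TolSep f C) (a b c d d' : ℝ) :
    tolR f a b c d + tolR f a b d d' = tolR f a b c d' := by
  simp only [tolR]
  rw [← intervalIntegral.integral_add_adjacent_intervals (hf.iy a c d) (hf.iy a d d'),
    ← intervalIntegral.integral_add_adjacent_intervals (hf.iy b c d) (hf.iy b d d')]
  ring

lemma TolSep.px (hf : TolSep f C) (a b : ℝ) : Continuous fun y => ∫ x in a..b, f x y := by
  refine intervalIntegral.continuous_of_dominated_interval (bound := fun _ => C) ?_ ?_ ?_ ?_
  · intro y; exact (hf.cx y).aestronglyMeasurable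
  · intro y; exact Eventually.of_forall fun x _ => hf.bd x y
  · exact intervalIntegrable_const
  · exact Eventually.of_forall fun x _ => hf.cy x

lemma TolSep.py (hf : TolSep f C) (c d : ℝ) : Continuous fun x => ∫ y in c..d, f x y := by
  refine intervalIntegral.continuous_of_dominated_interval (bound := fun _ => C) ?_ ?_ ?_ ?_
  · intro x; exact (hf.cy x).aestronglyMeasurable
  · intro x; exact Eventually.of_forall fun y _ => hf.bd x y
  · exact intervalIntegrable_const
  · exact Eventually.of_forall fun y _ => hf.cx y

lemma TolSep.contb (hf : TolSep f C) (a c d : ℝ) : Continuous fun b => tolR f a b c d := by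
  have h1 := intervalIntegral.continuous_primitive (hf.ix c) a
  have h2 := intervalIntegral.continuous_primitive (hf.ix d) a
  have h3 := hf.py c d
  unfold tolR
  fun_prop

lemma TolSep.contd (hf : TolSep f C) (a b c : ℝ) : Continuous fun d => tolR f a b c d := by
  have h1 := intervalIntegral.continuous_primitive (hf.iy a) c
  have h2 := intervalIntegral.continuous_primitive (hf.iy b) c
  have h3 := hf.px a b
  unfold tolR
  fun_prop

lemma tolR_negx (a b c d : ℝ) : tolR f a b c d = - tolR f b a c d := by
  simp only [tolR]
  rw [intervalIntegral.integral_symm b a, intervalIntegral.integral_symm b a]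
  ring

lemma tolR_negy (a b c d : ℝ) : tolR f a b c d = - tolR f a b d c := by
  simp only [tolR]
  rw [intervalIntegral.integral_symm d c, intervalIntegral.integral_symm d c]
  ring

lemma TolSep.conta (hf : TolSep f C) (b c d : ℝ) : Continuous fun a => tolR f a b c d := by
  have := (hf.contb b c d).neg
  simp_rw [tolR_negx _ b]
  exact this

lemma TolSep.contc (hf : TolSep f C) (a b d : ℝ) : Continuous fun c => tolR f a b c d := by
  have := (hf.contd a b d).neg
  simp_rw [tolR_negy _ _ _ d]
  exact this

lemma tol_lim_right {g : ℝ → ℂ} (hg : Continuous g) {a b : ℝ} (hab : a < b)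
    (h : ∀ x ∈ Ioo a b, g x = 0) : g b = 0 := by
  have hcl : IsClosed {x | g x = 0} := isClosed_eq hg continuous_const
  have : closure (Ioo a b) ⊆ {x | g x = 0} := hcl.closure_subset_iff.mpr h
  rw [closure_Ioo hab.ne] at this
  exact this ⟨hab.le, le_rfl⟩

lemma tol_lim_left {g : ℝ → ℂ} (hg : Continuous g) {a b : ℝ} (hab : a < b)
    (h : ∀ x ∈ Ioo a b, g x = 0) : g a = 0 := by
  have hcl : IsClosed {x | g x = 0} := isClosed_eq hg continuous_const
  have : closure (Ioo a b) ⊆ {x | g x = 0} := hcl.closure_subset_iff.mpr h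
  rw [closure_Ioo hab.ne] at this
  exact this ⟨le_rfl, hab.le⟩

lemma TolSep.zero (hf : TolSep f C) {a b c d : ℝ} (hab : a ≤ b) (hcd : c ≤ d)
    (hol : ∀ x ∈ Ioo a b, ∀ y ∈ Ioo c d,
      DifferentiableAt ℂ (fun z : ℂ => f z.re z.im) (x + y * Complex.I)) :
    tolR f a b c d = 0 := by
  rcases hab.eq_or_lt with rfl | hab
  · simp [tolR]
  rcases hcd.eq_or_lt with rfl | hcd
  · simp [tolR]
  have h0 : ∀ a' ∈ Ioo a b, ∀ b' ∈ Ioo a' b, ∀ c' ∈ Ioo c d, ∀ d' ∈ Ioo c' d,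
      tolR f a' b' c' d' = 0 := by
    intro a' ha b' hb c' hc d' hd
    have := Complex.integral_boundary_rect_eq_zero_of_differentiableOn
      (fun z : ℂ => f z.re z.im) (a' + c' * Complex.I) (b' + d' * Complex.I) (by
        intro z hz
        rw [Complex.mem_reProdIm] at hz
        simp only [Complex.add_re, Complex.ofReal_re, Complex.mul_re, Complex.I_re, mul_zero,
          Complex.ofReal_im, Complex.I_im, mul_one, sub_self, add_zero, Complex.add_im,
          Complex.mul_im, zero_add] at hz
        rw [uIcc_of_le hb.1.le, uIcc_of_le hd.1.le] at hz
        have := hol z.re ⟨ha.1.trans_le hz.1.1, hz.1.2.trans_lt hb.2⟩ z.im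
          ⟨hc.1.trans_le hz.2.1, hz.2.2.trans_lt hd.2⟩
        rw [Complex.re_add_im] at this
        exact this.differentiableWithinAt)
    simpa [tolR] using this
  have h1 : ∀ a' ∈ Ioo a b, ∀ b' ∈ Ioo a' b, ∀ c' ∈ Ioo c d, tolR f a' b' c' d = 0 :=
    fun a' ha b' hb c' hc => tol_lim_right (hf.contd a' b' c') hc.2 (h0 a' ha b' hb c' hc)
  have h2 : ∀ a' ∈ Ioo a b, ∀ b' ∈ Ioo a' b, tolR f a' b' c d = 0 :=
    fun a' ha b' hb => tol_lim_left (hf.contc a' b' d) hcd (h1 a' ha b' hb)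
  have h3 : ∀ a' ∈ Ioo a b, tolR f a' b c d = 0 :=
    fun a' ha => tol_lim_right (hf.contb a' c d) ha.2 (h2 a' ha)
  exact tol_lim_left (hf.conta b c d) hab h3
end tolR

section tolH
open MeasureTheory Set Function

/-- Indicator of the complement of `K`. -/
noncomputable def tolN (K : Set (ℝ × ℝ)) (x y : ℝ) : ℝ := Kᶜ.indicator (fun _ => (1:ℝ)) (x, y)

lemma tolN_nonneg (K : Set (ℝ × ℝ)) (x y : ℝ) : 0 ≤ tolN K x y :=
  indicator_nonneg (fun _ _ => zero_le_one) _

lemma tolN_bd (K : Set (ℝ × ℝ)) (x y : ℝ) : ‖tolN K x y‖ ≤ 1 := by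
  unfold tolN indicator
  split_ifs <;> simp

lemma tolN_meas {K : Set (ℝ × ℝ)} (hK : MeasurableSet K) : Measurable (uncurry (tolN K)) := by
  have : uncurry (tolN K) = Kᶜ.indicator (fun _ => (1:ℝ)) := by ext ⟨x, y⟩; rfl
  rw [this]
  exact measurable_const.indicator hK.compl

lemma tol_mono_int {u : ℝ → ℝ} {a a1 b1 b : ℝ} (h0 : ∀ x, 0 ≤ u x) (ha : a ≤ a1) (h1 : a1 ≤ b1)
    (hb : b1 ≤ b) (hi : IntervalIntegrable u volume a b) :
    ∫ x in a1..b1, u x ≤ ∫ x in a..b, u x :=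
  intervalIntegral.integral_mono_interval ha h1 hb (Eventually.of_forall h0) hi

lemma tol_half {f : ℝ → ℝ → ℂ} {C : ℝ} (hf : TolSep f C) {D : ℝ → ℝ → ℂ} {M : ℝ} (hM : 0 ≤ M)
    (hDm : Measurable (uncurry D)) (hDb : ∀ x y, ‖D x y‖ ≤ M) {K : Set (ℝ × ℝ)} (hK : IsClosed K)
    {a a1 b1 b c c1 d1 d r : ℝ} (ha : a ≤ a1) (hab1 : a1 ≤ b1) (hb : b1 ≤ b)
    (hc : c ≤ c1) (hcd1 : c1 ≤ d1) (hd : d1 ≤ d) (hr : 0 ≤ r) (hasp : d - c ≤ r * (b - a))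
    (hsub : ∀ x y, (x, y) ∈ K → x ∈ Icc a b → y ∈ Icc c d → x ∈ Icc a1 b1)
    (hya : ∃ y ∈ Icc c d, (a1, y) ∈ K) (hyb : ∃ y ∈ Icc c d, (b1, y) ∈ K)
    (hLx : ∀ s y, (s, y) ∈ K → s ∈ Icc a b → y ∈ Icc c d → ∀ x ∈ Icc a b,
      ‖f x y - f s y‖ ≤ M * |x - s|)
    (hLy : ∀ x s, (x, s) ∈ K → x ∈ Icc a b → s ∈ Icc c d → ∀ y ∈ Icc c d,
      ‖f x y - f x s‖ ≤ M * |y - s|)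
    (hder : ∀ x y, (x, y) ∈ K → x ∈ Icc a b → y ∈ Icc c d →
      HasDerivAt (fun x => f x y) (D x y) x)
    (hD0 : ∀ x y, (x, y) ∉ K → D x y = 0) :
    ‖(∫ y in c1..d1, f b1 y) - (∫ y in c1..d1, f a1 y) - ∫ y in c1..d1, ∫ x in a1..b1, D x y‖
      ≤ (3 * r + 2) * M * ∫ y in c..d, ∫ x in a..b, tolN K x y := by
  have hNm := tolN_meas hK.measurableSet
  have hpw : ∀ y ∈ Icc c d, ‖f b1 y - f a1 y - ∫ x in a1..b1, D x y‖ ≤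
      (3 * r + 2) * M * ∫ x in a..b, tolN K x y := by
    intro y hy
    have hnn : 0 ≤ ∫ x in a..b, tolN K x y :=
      intervalIntegral.integral_nonneg (by linarith) fun x _ => tolN_nonneg K x y
    by_cases hne : ((fun x => (x, y)) ⁻¹' K ∩ Icc a1 b1).Nonempty
    · have hKy : IsClosed ((fun x : ℝ => (x, y)) ⁻¹' K) := hK.preimage (by fun_prop)
      have hsubI : Icc a1 b1 ⊆ Icc a b := Icc_subset_Icc ha hb
      have h := tol_line (fun x => f x y) (fun x => D x y) a1 b1 M hab1 hM _ hKy hne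
        (tol_iix hDm hDb y a1 b1)
        (fun s hs x hx => hLx s y hs.1 (hsubI hs.2) hy x (hsubI hx))
        (fun s hs => hder s y hs.1 (hsubI hs.2) hy)
        (fun x _ hx => hD0 x y hx)
      refine h.trans ?_
      have h2 : ∫ x in a1..b1, ((fun x : ℝ => (x, y)) ⁻¹' K)ᶜ.indicator (fun _ => (1:ℝ)) x ≤
          ∫ x in a..b, tolN K x y :=
        tol_mono_int (u := fun x => tolN K x y) (fun x => tolN_nonneg K x y) ha hab1 hb
          (tol_iix hNm (tolN_bd K) y a b)
      calc _ ≤ 2 * M * ∫ x in a..b, tolN K x y := by gcongr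
        _ ≤ _ := by gcongr; linarith
    · have hno : ∀ x ∈ Icc a b, (x, y) ∉ K := fun x hx hxK =>
        hne ⟨x, hxK, hsub x y hxK hx hy⟩
      have hz : ∫ x in a1..b1, D x y = 0 := by
        rw [intervalIntegral.integral_congr (g := fun _ => (0:ℂ))]
        · simp
        · intro x hx
          rw [uIcc_of_le hab1] at hx
          exact hD0 x y (hno x ⟨ha.trans hx.1, hx.2.trans hb⟩)
      have hN1 : ∫ x in a..b, tolN K x y = b - a := by
        rw [intervalIntegral.integral_congr (g := fun _ => (1:ℝ))]
        · simp
        · intro x hx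
          rw [uIcc_of_le (by linarith)] at hx
          simp [tolN, hno x hx]
      rw [hz, hN1, sub_zero]
      obtain ⟨ya, hya, hyaK⟩ := hya
      obtain ⟨yb, hyb, hybK⟩ := hyb
      have ha1 : a1 ∈ Icc a b := ⟨ha, hab1.trans hb⟩
      have hb1 : b1 ∈ Icc a b := ⟨ha.trans hab1, hb⟩
      have e1 := hLy b1 yb hybK hb1 hyb y hy
      have e2 := hLy a1 ya hyaK ha1 hya y hy
      have e3 := hLy b1 yb hybK hb1 hyb ya hya
      have e4 := hLx a1 ya hyaK ha1 hya b1 hb1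
      have q1 : |y - yb| ≤ d - c := abs_le.mpr ⟨by linarith [hy.1, hyb.2], by linarith [hy.2, hyb.1]⟩
      have q2 : |y - ya| ≤ d - c := abs_le.mpr ⟨by linarith [hy.1, hya.2], by linarith [hy.2, hya.1]⟩
      have q3 : |ya - yb| ≤ d - c :=
        abs_le.mpr ⟨by linarith [hya.1, hyb.2], by linarith [hya.2, hyb.1]⟩
      have q4 : |b1 - a1| ≤ b - a := abs_le.mpr ⟨by linarith, by linarith⟩
      have e0 : f b1 y - f a1 y = (f b1 y - f b1 yb) - (f b1 ya - f b1 yb) + (f b1 ya - f a1 ya)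
          - (f a1 y - f a1 ya) := by ring
      have m1 := mul_le_mul_of_nonneg_left q1 hM
      have m2 := mul_le_mul_of_nonneg_left q2 hM
      have m3 := mul_le_mul_of_nonneg_left q3 hM
      have m4 := mul_le_mul_of_nonneg_left q4 hM
      have m5 := mul_le_mul_of_nonneg_left hasp hM
      have m6 : 0 ≤ M * (b - a) := mul_nonneg hM (by linarith)
      calc ‖f b1 y - f a1 y‖ ≤ ‖f b1 y - f b1 yb‖ + ‖f b1 ya - f b1 yb‖ + ‖f b1 ya - f a1 ya‖
            + ‖f a1 y - f a1 ya‖ := by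
              rw [e0]
              refine (norm_sub_le _ _).trans ?_
              gcongr
              refine (norm_add_le _ _).trans ?_
              gcongr
              exact norm_sub_le _ _
        _ ≤ _ := by nlinarith
  rw [← intervalIntegral.integral_sub (hf.iy _ _ _) (hf.iy _ _ _),
    ← intervalIntegral.integral_sub ((hf.iy _ _ _).sub (hf.iy _ _ _)) (tol_iixy hDm hDb _ _ _ _)]
  have hi : ∀ c d, IntervalIntegrable (fun y => (3 * r + 2) * M * ∫ x in a..b, tolN K x y)
      volume c d := fun c d => (tol_iixy hNm (tolN_bd K) a b c d).const_mul _
  refine (intervalIntegral.norm_integral_le_of_norm_le hcd1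
    (g := fun y => (3 * r + 2) * M * ∫ x in a..b, tolN K x y)
    (Eventually.of_forall fun y hy => hpw y ⟨hc.trans hy.1.le, hy.2.trans hd⟩) (hi _ _)).trans ?_
  rw [← intervalIntegral.integral_const_mul]
  refine tol_mono_int (fun y => ?_) hc hcd1 hd (hi _ _)
  refine mul_nonneg (by positivity) ?_
  exact intervalIntegral.integral_nonneg (by linarith) fun x _ => tolN_nonneg K x y

/-- Hypotheses on the exceptional set `K` relative to a rectangle. -/
structure TolK (f D : ℝ → ℝ → ℂ) (K : Set (ℝ × ℝ)) (M a b c d : ℝ) : Prop where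
  hM : 0 ≤ M
  Dm : Measurable (uncurry D)
  Db : ∀ x y, ‖D x y‖ ≤ M
  cl : IsClosed K
  Lx : ∀ s y, (s, y) ∈ K → s ∈ Icc a b → y ∈ Icc c d → ∀ x ∈ Icc a b,
      ‖f x y - f s y‖ ≤ M * |x - s|
  Ly : ∀ x s, (x, s) ∈ K → x ∈ Icc a b → s ∈ Icc c d → ∀ y ∈ Icc c d,
      ‖f x y - f x s‖ ≤ M * |y - s|
  dx : ∀ x y, (x, y) ∈ K → x ∈ Icc a b → y ∈ Icc c d →
      HasDerivAt (fun x => f x y) (D x y) x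
  dy : ∀ x y, (x, y) ∈ K → x ∈ Icc a b → y ∈ Icc c d →
      HasDerivAt (fun y => f x y) (Complex.I * D x y) y
  D0 : ∀ x y, (x, y) ∉ K → D x y = 0
  hol : ∀ x y, (x, y) ∉ K → x ∈ Icc a b → y ∈ Icc c d →
    DifferentiableAt ℂ (fun z : ℂ => f z.re z.im) (x + y * Complex.I)

lemma TolK.mono {f D : ℝ → ℝ → ℂ} {K : Set (ℝ × ℝ)} {M a b c d a' b' c' d' : ℝ}
    (h : TolK f D K M a b c d) (ha : a ≤ a') (hb : b' ≤ b) (hc : c ≤ c') (hd : d' ≤ d) :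
    TolK f D K M a' b' c' d' := by
  have h1 : Icc a' b' ⊆ Icc a b := Icc_subset_Icc ha hb
  have h2 : Icc c' d' ⊆ Icc c d := Icc_subset_Icc hc hd
  exact
  { hM := h.hM, Dm := h.Dm, Db := h.Db, cl := h.cl, D0 := h.D0
    Lx := fun s y k hs hy x hx => h.Lx s y k (h1 hs) (h2 hy) x (h1 hx)
    Ly := fun s y k hs hy x hx => h.Ly s y k (h1 hs) (h2 hy) x (h2 hx)
    dx := fun x y k hx hy => h.dx x y k (h1 hx) (h2 hy)
    dy := fun x y k hx hy => h.dy x y k (h1 hx) (h2 hy)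
    hol := fun x y k hx hy => h.hol x y k (h1 hx) (h2 hy) }

lemma TolSep.swap {f : ℝ → ℝ → ℂ} {C : ℝ} (hf : TolSep f C) : TolSep (fun x y => f y x) C :=
  ⟨hf.cy, hf.cx, fun x y => hf.bd y x⟩

lemma TolK.est {f D : ℝ → ℝ → ℂ} {C : ℝ} (hf : TolSep f C) {K : Set (ℝ × ℝ)} {M a b c d r : ℝ}
    (h : TolK f D K M a b c d) (hab : a ≤ b) (hcd : c ≤ d) (hr : 0 ≤ r)
    (h1 : d - c ≤ r * (b - a)) (h2 : b - a ≤ r * (d - c))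
    (hne : (K ∩ Icc a b ×ˢ Icc c d).Nonempty) :
    ‖tolR f a b c d‖ ≤ 2 * (3 * r + 2) * M * ∫ y in c..d, ∫ x in a..b, tolN K x y := by
  have hcpt : IsCompact (K ∩ Icc a b ×ˢ Icc c d) :=
    (isCompact_Icc.prod isCompact_Icc).inter_left h.cl
  obtain ⟨⟨a1, ya⟩, ⟨haK, haI, haJ⟩, hamin⟩ := hcpt.exists_isMinOn hne continuous_fst.continuousOn
  obtain ⟨⟨b1, yb⟩, ⟨hbK, hbI, hbJ⟩, hbmax⟩ := hcpt.exists_isMaxOn hne continuous_fst.continuousOn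
  obtain ⟨⟨xc, c1⟩, ⟨hcK, hcI, hcJ⟩, hcmin⟩ := hcpt.exists_isMinOn hne continuous_snd.continuousOn
  obtain ⟨⟨xd, d1⟩, ⟨hdK, hdI, hdJ⟩, hdmax⟩ := hcpt.exists_isMaxOn hne continuous_snd.continuousOn
  simp only at haI haJ hbI hbJ hcI hcJ hdI hdJ
  have sx : ∀ x y, (x, y) ∈ K → x ∈ Icc a b → y ∈ Icc c d → x ∈ Icc a1 b1 := fun x y k hx hy =>
    ⟨isMinOn_iff.mp hamin (x, y) ⟨k, hx, hy⟩, isMaxOn_iff.mp hbmax (x, y) ⟨k, hx, hy⟩⟩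
  have sy : ∀ x y, (x, y) ∈ K → x ∈ Icc a b → y ∈ Icc c d → y ∈ Icc c1 d1 := fun x y k hx hy =>
    ⟨isMinOn_iff.mp hcmin (x, y) ⟨k, hx, hy⟩, isMaxOn_iff.mp hdmax (x, y) ⟨k, hx, hy⟩⟩
  have hab1 : a1 ≤ b1 := (sx a1 ya haK haI haJ).2
  have hcd1 : c1 ≤ d1 := (sy xc c1 hcK hcI hcJ).2
  have H1 := tol_half hf h.hM h.Dm h.Db h.cl haI.1 hab1 hbI.2 hcJ.1 hcd1 hdJ.2 hr h1 sx
    ⟨ya, haJ, haK⟩ ⟨yb, hbJ, hbK⟩ h.Lx h.Ly h.dx h.D0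
  have hcl' : IsClosed (Prod.swap ⁻¹' K : Set (ℝ × ℝ)) := h.cl.preimage continuous_swap
  have H2 := tol_half hf.swap (D := fun x y => Complex.I * D y x) (K := Prod.swap ⁻¹' K) h.hM
    ((tol_swap_meas h.Dm).const_mul Complex.I) (fun x y => by simpa using h.Db y x) hcl'
    hcJ.1 hcd1 hdJ.2 haI.1 hab1 hbI.2 hr h2 (fun x y k hx hy => sy y x k hy hx)
    ⟨xc, hcI, hcK⟩ ⟨xd, hdI, hdK⟩ (fun s y k hs hy x hx => h.Ly y s k hy hs x hx)
    (fun s y k hs hy x hx => h.Lx y s k hy hs x hx) (fun x y k hx hy => h.dy y x k hy hx)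
    (fun x y k => by simp [h.D0 y x k])
  have hNs : ∀ x y, tolN (Prod.swap ⁻¹' K) x y = tolN K y x := fun x y => rfl
  simp only [hNs] at H2
  rw [tol_fubini (g := fun x y => tolN K x y) (tolN_meas h.cl.measurableSet) (tolN_bd K)] at H2
  simp only [intervalIntegral.integral_const_mul] at H2
  rw [tol_fubini (g := fun x y => D x y) h.Dm h.Db] at H2
  -- reduce to the minimal rectangle
  have z1 : tolR f a a1 c d = 0 := hf.zero haI.1 hcd fun x hx y hy => by
    have hx' : x ∈ Icc a b := ⟨hx.1.le, hx.2.le.trans haI.2⟩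
    refine h.hol x y (fun k => ?_) hx' (Ioo_subset_Icc_self hy)
    exact absurd (sx x y k hx' (Ioo_subset_Icc_self hy)).1 (not_le.mpr hx.2)
  have z2 : tolR f b1 b c d = 0 := hf.zero hbI.2 hcd fun x hx y hy => by
    have hx' : x ∈ Icc a b := ⟨hbI.1.trans hx.1.le, hx.2.le⟩
    refine h.hol x y (fun k => ?_) hx' (Ioo_subset_Icc_self hy)
    exact absurd (sx x y k hx' (Ioo_subset_Icc_self hy)).2 (not_le.mpr hx.1)
  have z3 : tolR f a1 b1 c c1 = 0 := hf.zero hab1 hcJ.1 fun x hx y hy => by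
    have hx' : x ∈ Icc a b := ⟨haI.1.trans hx.1.le, hx.2.le.trans hbI.2⟩
    have hy' : y ∈ Icc c d := ⟨hy.1.le, hy.2.le.trans hcJ.2⟩
    refine h.hol x y (fun k => ?_) hx' hy'
    exact absurd (sy x y k hx' hy').1 (not_le.mpr hy.2)
  have z4 : tolR f a1 b1 d1 d = 0 := hf.zero hab1 hdJ.2 fun x hx y hy => by
    have hx' : x ∈ Icc a b := ⟨haI.1.trans hx.1.le, hx.2.le.trans hbI.2⟩
    have hy' : y ∈ Icc c d := ⟨hdJ.1.trans hy.1.le, hy.2.le⟩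
    refine h.hol x y (fun k => ?_) hx' hy'
    exact absurd (sy x y k hx' hy').2 (not_le.mpr hy.1)
  have hred : tolR f a b c d = tolR f a1 b1 c1 d1 := by
    rw [← hf.addx a a1 b c d, ← hf.addx a1 b1 b c d, ← hf.addy a1 b1 c c1 d,
      ← hf.addy a1 b1 c1 d1 d, z1, z2, z3, z4]
    ring
  rw [hred]
  set m := ∫ y in c..d, ∫ x in a..b, tolN K x y
  set I2 := ∫ y in c1..d1, ∫ x in a1..b1, D x y
  set A := (∫ y in c1..d1, f b1 y) - (∫ y in c1..d1, f a1 y) - I2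
  set B := (∫ y in a1..b1, f y d1) - (∫ y in a1..b1, f y c1) - Complex.I * I2
  have e : tolR f a1 b1 c1 d1 = Complex.I * A - B := by
    simp only [tolR, A, B]; ring
  rw [e]
  calc ‖Complex.I * A - B‖ ≤ ‖Complex.I * A‖ + ‖B‖ := norm_sub_le _ _
    _ = ‖A‖ + ‖B‖ := by simp
    _ ≤ _ := by linarith
end tolH

section tolV
open MeasureTheory Set Function

/-- `K` together with the points at distance more than `ε` from it. -/
def tolKe (K : Set (ℝ × ℝ)) (ε : ℝ) : Set (ℝ × ℝ) := K ∪ {p | ε < Metric.infDist p K}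

lemma tolKe_meas {K : Set (ℝ × ℝ)} (hK : IsClosed K) (ε : ℝ) : MeasurableSet (tolKe K ε) :=
  hK.measurableSet.union
    (isOpen_lt continuous_const (Metric.continuous_infDist_pt K)).measurableSet

lemma TolK.bisect {f D : ℝ → ℝ → ℂ} {C : ℝ} (hf : TolSep f C) {K : Set (ℝ × ℝ)} {M r ε : ℝ}
    (hr : 0 ≤ r) (n : ℕ) : ∀ a b c d : ℝ, TolK f D K M a b c d → a ≤ b → c ≤ d →
    d - c ≤ r * (b - a) → b - a ≤ r * (d - c) → b - a ≤ 2 ^ n * ε → d - c ≤ 2 ^ n * ε →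
    ‖tolR f a b c d‖ ≤
      2 * (3 * r + 2) * M * ∫ y in c..d, ∫ x in a..b, tolN (tolKe K ε) x y := by
  induction n with
  | zero =>
    intro a b c d h hab hcd h1 h2 h3 h4
    simp only [pow_zero, one_mul] at h3 h4
    by_cases hne : (K ∩ Icc a b ×ˢ Icc c d).Nonempty
    · refine (h.est hf hab hcd hr h1 h2 hne).trans (le_of_eq ?_)
      congr 1
      refine intervalIntegral.integral_congr fun y hy => ?_
      refine intervalIntegral.integral_congr fun x hx => ?_
      rw [uIcc_of_le hab] at hx
      rw [uIcc_of_le hcd] at hy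
      obtain ⟨⟨s, t⟩, hK, hs, ht⟩ := hne
      simp only at hs ht
      have hd : Metric.infDist (x, y) K ≤ ε := by
        refine (Metric.infDist_le_dist_of_mem hK).trans ?_
        rw [Prod.dist_eq]
        refine max_le ?_ ?_
        · rw [Real.dist_eq, abs_le]
          constructor <;> linarith [hx.1, hx.2, hs.1, hs.2]
        · rw [Real.dist_eq, abs_le]
          constructor <;> linarith [hy.1, hy.2, ht.1, ht.2]
      have : (x, y) ∈ tolKe K ε ↔ (x, y) ∈ K := by
        simp [tolKe, not_lt.mpr hd]
      by_cases hxK : (x, y) ∈ K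
      · simp [tolN, hxK, this]
      · simp [tolN, hxK, this]
    · rw [hf.zero hab hcd]
      · rw [norm_zero]
        have := h.hM
        refine mul_nonneg (by positivity) ?_
        refine intervalIntegral.integral_nonneg hcd fun y _ => ?_
        exact intervalIntegral.integral_nonneg hab fun x _ => tolN_nonneg _ x y
      · intro x hx y hy
        have hx := Ioo_subset_Icc_self hx
        have hy := Ioo_subset_Icc_self hy
        exact h.hol x y (fun k => hne ⟨(x, y), k, hx, hy⟩) hx hy
  | succ n ih =>
    intro a b c d h hab hcd h1 h2 h3 h4
    rw [pow_succ] at h3 h4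
    set p := (a + b) / 2 with hp
    set q := (c + d) / 2 with hq
    have hpa : p - a = (b - a) / 2 := by rw [hp]; ring
    have hbp : b - p = (b - a) / 2 := by rw [hp]; ring
    have hqc : q - c = (d - c) / 2 := by rw [hq]; ring
    have hdq : d - q = (d - c) / 2 := by rw [hq]; ring
    have i1 := ih a p c q (h.mono le_rfl (by linarith) le_rfl (by linarith)) (by linarith)
      (by linarith) (by rw [hpa, hqc]; linarith) (by rw [hpa, hqc]; linarith)
      (by linarith) (by linarith)
    have i2 := ih p b c q (h.mono (by linarith) le_rfl le_rfl (by linarith)) (by linarith)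
      (by linarith) (by rw [hbp, hqc]; linarith) (by rw [hbp, hqc]; linarith)
      (by linarith) (by linarith)
    have i3 := ih a p q d (h.mono le_rfl (by linarith) (by linarith) le_rfl) (by linarith)
      (by linarith) (by rw [hpa, hdq]; linarith) (by rw [hpa, hdq]; linarith)
      (by linarith) (by linarith)
    have i4 := ih p b q d (h.mono (by linarith) le_rfl (by linarith) le_rfl) (by linarith)
      (by linarith) (by rw [hbp, hdq]; linarith) (by rw [hbp, hdq]; linarith)
      (by linarith) (by linarith)
    have hNm := tolN_meas (tolKe_meas h.cl ε)
    have hNb := tolN_bd (tolKe K ε)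
    have ex : ∀ y, ∫ x in a..b, tolN (tolKe K ε) x y =
        (∫ x in a..p, tolN (tolKe K ε) x y) + ∫ x in p..b, tolN (tolKe K ε) x y := fun y =>
      (intervalIntegral.integral_add_adjacent_intervals (tol_iix hNm hNb y _ _)
        (tol_iix hNm hNb y _ _)).symm
    have ey : ∀ a b, ∫ y in c..d, ∫ x in a..b, tolN (tolKe K ε) x y =
        (∫ y in c..q, ∫ x in a..b, tolN (tolKe K ε) x y) +
          ∫ y in q..d, ∫ x in a..b, tolN (tolKe K ε) x y := fun a b =>
      (intervalIntegral.integral_add_adjacent_intervals (tol_iixy hNm hNb _ _ _ _)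
        (tol_iixy hNm hNb _ _ _ _)).symm
    have e : ∫ y in c..d, ∫ x in a..b, tolN (tolKe K ε) x y =
        (∫ y in c..d, ∫ x in a..p, tolN (tolKe K ε) x y) +
          ∫ y in c..d, ∫ x in p..b, tolN (tolKe K ε) x y := by
      simp only [ex]
      exact intervalIntegral.integral_add (tol_iixy hNm hNb _ _ _ _) (tol_iixy hNm hNb _ _ _ _)
    rw [e, ey, ey, ← hf.addx a p b c d, ← hf.addy a p c q d, ← hf.addy p b c q d]
    have t1 := norm_add_le (tolR f a p c q + tolR f a p q d) (tolR f p b c q + tolR f p b q d)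
    have t2 := norm_add_le (tolR f a p c q) (tolR f a p q d)
    have t3 := norm_add_le (tolR f p b c q) (tolR f p b q d)
    linarith

lemma tol_lim_N {K : Set (ℝ × ℝ)} (hK : IsClosed K) (hne : K.Nonempty) (a b c d : ℝ) :
    Tendsto (fun n : ℕ => ∫ y in c..d, ∫ x in a..b, tolN (tolKe K (1 / ((n:ℝ) + 1))) x y)
      atTop (𝓝 0) := by
  have hNm := fun ε => tolN_meas (tolKe_meas hK ε)
  have hNb := fun ε => tolN_bd (tolKe K ε)
  have hpt : ∀ x y, Tendsto (fun n : ℕ => tolN (tolKe K (1 / ((n:ℝ) + 1))) x y) atTop (𝓝 0) := by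
    intro x y
    by_cases hxy : (x, y) ∈ K
    · have : ∀ ε, tolN (tolKe K ε) x y = 0 := fun ε => by simp [tolN, tolKe, hxy]
      simp [this]
    · have hpos : 0 < Metric.infDist (x, y) K := (hK.notMem_iff_infDist_pos hne).mp hxy
      have h1 : ∀ᶠ n : ℕ in atTop, 1 / ((n:ℝ) + 1) < Metric.infDist (x, y) K :=
        tendsto_one_div_add_atTop_nhds_zero_nat.eventually_lt_const hpos
      refine tendsto_const_nhds.congr' ?_
      filter_upwards [h1] with n hn
      have : (x, y) ∈ tolKe K (1 / ((n:ℝ) + 1)) := Or.inr hn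
      exact (indicator_of_notMem (not_not_intro this) _).symm
  have hin : ∀ y, Tendsto (fun n : ℕ => ∫ x in a..b, tolN (tolKe K (1 / ((n:ℝ) + 1))) x y)
      atTop (𝓝 0) := by
    intro y
    have := intervalIntegral.tendsto_integral_filter_of_dominated_convergence (μ := volume)
      (a := a) (b := b) (l := atTop) (F := fun (n : ℕ) x => tolN (tolKe K (1 / ((n:ℝ) + 1))) x y)
      (f := fun _ => 0) (fun _ => 1)
      (Eventually.of_forall fun n => (intervalIntegrable_iff.mp
        (tol_iix (hNm _) (hNb _) y a b)).aestronglyMeasurable)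
      (Eventually.of_forall fun n => Eventually.of_forall fun x _ => hNb _ x y)
      intervalIntegrable_const (Eventually.of_forall fun x _ => hpt x y)
    simpa using this
  have := intervalIntegral.tendsto_integral_filter_of_dominated_convergence (μ := volume)
      (a := c) (b := d) (l := atTop)
      (F := fun (n : ℕ) y => ∫ x in a..b, tolN (tolKe K (1 / ((n:ℝ) + 1))) x y)
      (f := fun _ => 0) (fun _ => 1 * |b - a|)
      (Eventually.of_forall fun n => (intervalIntegrable_iff.mp
        (tol_iixy (hNm _) (hNb _) a b c d)).aestronglyMeasurable)
      (Eventually.of_forall fun n => Eventually.of_forall fun y _ =>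
        intervalIntegral.norm_integral_le_of_norm_le_const fun x _ => hNb _ x y)
      intervalIntegrable_const (Eventually.of_forall fun y _ => hin y)
  simpa using this

lemma TolK.vanish {f D : ℝ → ℝ → ℂ} {C : ℝ} (hf : TolSep f C) {K : Set (ℝ × ℝ)} {M a b c d : ℝ}
    (h : TolK f D K M a b c d) (hab : a ≤ b) (hcd : c ≤ d) : tolR f a b c d = 0 := by
  rcases K.eq_empty_or_nonempty with hK | hK
  · refine hf.zero hab hcd fun x hx y hy => h.hol x y (by simp [hK]) (Ioo_subset_Icc_self hx)
      (Ioo_subset_Icc_self hy)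
  rcases hab.eq_or_lt with rfl | hab
  · simp [tolR]
  rcases hcd.eq_or_lt with rfl | hcd
  · simp [tolR]
  have p1 : 0 < b - a := by linarith
  have p2 : 0 < d - c := by linarith
  set r := (d - c) / (b - a) + (b - a) / (d - c) with hr
  have hr0 : 0 ≤ r := by positivity
  have h1 : d - c ≤ r * (b - a) := by
    have : r * (b - a) = (d - c) + (b - a) / (d - c) * (b - a) := by rw [hr]; field_simp
    rw [this]; have : 0 ≤ (b - a) / (d - c) * (b - a) := by positivity
    linarith
  have h2 : b - a ≤ r * (d - c) := by
    have : r * (d - c) = (d - c) / (b - a) * (d - c) + (b - a) := by rw [hr]; field_simp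
    rw [this]; have : 0 ≤ (d - c) / (b - a) * (d - c) := by positivity
    linarith
  have key : ∀ n : ℕ, ‖tolR f a b c d‖ ≤ 2 * (3 * r + 2) * M *
      ∫ y in c..d, ∫ x in a..b, tolN (tolKe K (1 / ((n:ℝ) + 1))) x y := by
    intro n
    have hε : (0:ℝ) < 1 / ((n:ℝ) + 1) := by positivity
    obtain ⟨m, hm⟩ := pow_unbounded_of_one_lt (((b - a) + (d - c)) / (1 / ((n:ℝ) + 1)))
      (one_lt_two : (1:ℝ) < 2)
    rw [div_lt_iff₀ hε] at hm
    exact TolK.bisect hf hr0 m a b c d h hab.le hcd.le h1 h2 (by linarith) (by linarith)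
  have hlim := (tol_lim_N h.cl hK a b c d).const_mul (2 * (3 * r + 2) * M)
  rw [mul_zero] at hlim
  have := ge_of_tendsto' hlim key
  exact norm_le_zero_iff.mp this
end tolV

section tolM
open MeasureTheory Set Function

lemma tol_morera {f : ℝ → ℝ → ℂ} {C : ℝ} (hf : TolSep f C) {x0 y0 r : ℝ} (hr : 0 < r)
    (h0 : ∀ a b c d, a ≤ b → c ≤ d → x0 - r ≤ a → b ≤ x0 + r → y0 - r ≤ c → d ≤ y0 + r →
      tolR f a b c d = 0) :
    AnalyticAt ℂ (fun z : ℂ => f z.re z.im) (x0 + y0 * Complex.I) := by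
  have hC : 0 ≤ C := (norm_nonneg _).trans (hf.bd 0 0)
  have h1 : ∀ a b c d, a ∈ Icc (x0 - r) (x0 + r) → b ∈ Icc (x0 - r) (x0 + r) →
      c ∈ Icc (y0 - r) (y0 + r) → d ∈ Icc (y0 - r) (y0 + r) → tolR f a b c d = 0 := by
    have h2 : ∀ a b c d, c ≤ d → a ∈ Icc (x0 - r) (x0 + r) → b ∈ Icc (x0 - r) (x0 + r) →
      c ∈ Icc (y0 - r) (y0 + r) → d ∈ Icc (y0 - r) (y0 + r) → tolR f a b c d = 0 := by
      intro a b c d hcd ha hb hc hd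
      rcases le_total a b with hab | hab
      · exact h0 a b c d hab hcd ha.1 hb.2 hc.1 hd.2
      · rw [tolR_negx, h0 b a c d hab hcd hb.1 ha.2 hc.1 hd.2, neg_zero]
    intro a b c d ha hb hc hd
    rcases le_total c d with hcd | hcd
    · exact h2 a b c d hcd ha hb hc hd
    · rw [tolR_negy, h2 a b d c hcd ha hb hd hc, neg_zero]
  have hx0 : x0 ∈ Icc (x0 - r) (x0 + r) := ⟨by linarith, by linarith⟩
  have hy0 : y0 ∈ Icc (y0 - r) (y0 + r) := ⟨by linarith, by linarith⟩
  set p : ℝ → ℝ → ℂ := fun x y => (∫ s in x0..x, f s y0) + Complex.I * ∫ t in y0..y, f x t with hp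
  have hp2 : ∀ x ∈ Icc (x0 - r) (x0 + r), ∀ y ∈ Icc (y0 - r) (y0 + r),
      p x y = Complex.I * (∫ t in y0..y, f x0 t) + ∫ s in x0..x, f s y := by
    intro x hx y hy
    have := h1 x0 x y0 y hx0 hx hy0 hy
    rw [tolR] at this
    simp only [hp]
    linear_combination this
  have dy : ∀ x y y', p x y' - p x y = Complex.I * ∫ t in y..y', f x t := by
    intro x y y'
    simp only [hp]
    rw [← intervalIntegral.integral_interval_sub_left (hf.iy x y0 y') (hf.iy x y0 y)]
    ring
  have dx : ∀ x ∈ Icc (x0 - r) (x0 + r), ∀ x' ∈ Icc (x0 - r) (x0 + r),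
      ∀ y ∈ Icc (y0 - r) (y0 + r), p x' y - p x y = ∫ s in x..x', f s y := by
    intro x hx x' hx' y hy
    rw [hp2 x hx y hy, hp2 x' hx' y hy,
      ← intervalIntegral.integral_interval_sub_left (hf.ix y x0 x') (hf.ix y x0 x)]
    ring
  set w0 : ℂ := x0 + y0 * Complex.I with hw0
  have hre : ∀ z ∈ Metric.ball w0 r, z.re ∈ Ioo (x0 - r) (x0 + r) := by
    intro z hz
    have : |(z - w0).re| < r := (Complex.abs_re_le_norm _).trans_lt (by simpa [dist_eq_norm] using hz)
    simp [hw0] at this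
    rw [abs_lt] at this
    constructor <;> linarith
  have him : ∀ z ∈ Metric.ball w0 r, z.im ∈ Ioo (y0 - r) (y0 + r) := by
    intro z hz
    have : |(z - w0).im| < r := (Complex.abs_im_le_norm _).trans_lt (by simpa [dist_eq_norm] using hz)
    simp [hw0] at this
    rw [abs_lt] at this
    constructor <;> linarith
  have hre' := fun z hz => Ioo_subset_Icc_self (hre z hz)
  have him' := fun z hz => Ioo_subset_Icc_self (him z hz)
  set P : ℂ → ℂ := fun z => p z.re z.im with hP
  have hcont : ContinuousOn P (Metric.ball w0 r) := by
    have : LipschitzOnWith (Real.toNNReal (2 * C)) P (Metric.ball w0 r) := by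
      refine LipschitzOnWith.of_dist_le_mul fun z hz w hw => ?_
      rw [Real.coe_toNNReal _ (by positivity), dist_eq_norm, dist_eq_norm]
      have e : P z - P w = (p z.re z.im - p w.re z.im) + (p w.re z.im - p w.re w.im) := by
        simp only [hP]; ring
      rw [e, dx _ (hre' w hw) _ (hre' z hz) _ (him' z hz), dy]
      have t1 : ‖∫ s in w.re..z.re, f s z.im‖ ≤ C * |z.re - w.re| :=
        intervalIntegral.norm_integral_le_of_norm_le_const fun x _ => hf.bd x _
      have t2 : ‖∫ s in w.im..z.im, f w.re s‖ ≤ C * |z.im - w.im| :=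
        intervalIntegral.norm_integral_le_of_norm_le_const fun x _ => hf.bd _ x
      have t3 := Complex.abs_re_le_norm (z - w)
      have t4 := Complex.abs_im_le_norm (z - w)
      rw [Complex.sub_re] at t3
      rw [Complex.sub_im] at t4
      calc _ ≤ ‖∫ s in w.re..z.re, f s z.im‖ + ‖Complex.I * ∫ s in w.im..z.im, f w.re s‖ :=
            norm_add_le _ _
        _ = ‖∫ s in w.re..z.re, f s z.im‖ + ‖∫ s in w.im..z.im, f w.re s‖ := by simp
        _ ≤ C * |z.re - w.re| + C * |z.im - w.im| := add_le_add t1 t2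
        _ ≤ C * ‖z - w‖ + C * ‖z - w‖ := by gcongr
        _ = _ := by ring
    exact this.continuousOn
  have hcx : ∀ y, y ∈ Icc (y0 - r) (y0 + r) → ContinuousOn (fun x => p x y) (Icc (x0 - r) (x0 + r)) := by
    intro y hy
    have : ContinuousOn (fun x => p x0 y + ∫ s in x0..x, f s y) (Icc (x0 - r) (x0 + r)) := by
      refine (continuous_const.add ?_).continuousOn
      exact intervalIntegral.continuous_primitive (fun a b => hf.ix y a b) x0
    refine this.congr fun x hx => ?_
    simp only
    rw [← dx x0 hx0 x hx y hy]; ring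
  have hcy : ∀ x, Continuous (fun y => p x y) := by
    intro x
    exact continuous_const.add (continuous_const.mul
      (intervalIntegral.continuous_primitive (fun a b => hf.iy x a b) y0))
  have hcons : Complex.IsConservativeOn P (Metric.ball w0 r) := by
    intro z w hzw
    have hz := hzw ⟨left_mem_uIcc, left_mem_uIcc⟩
    have hw := hzw ⟨right_mem_uIcc, right_mem_uIcc⟩
    rw [← add_eq_zero_iff_eq_neg, Complex.wedgeIntegral_add_wedgeIntegral_eq]
    simp only [hP]
    simp only [Complex.add_re, Complex.ofReal_re, Complex.mul_re, Complex.I_re, Complex.ofReal_im,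
      Complex.I_im, Complex.add_im, Complex.mul_im, mul_zero, mul_one, sub_self, add_zero, zero_add,
      smul_eq_mul]
    have hsub : uIcc z.re w.re ⊆ Icc (x0 - r) (x0 + r) := uIcc_subset_Icc (hre' z hz) (hre' w hw)
    have hsub2 : uIcc z.im w.im ⊆ Icc (y0 - r) (y0 + r) := uIcc_subset_Icc (him' z hz) (him' w hw)
    have i1 := fun y hy => ((hcx y hy).mono hsub).intervalIntegrable (μ := volume)
    have i2 := fun x => (hcy x).intervalIntegrable (μ := volume) z.im w.im
    have e1 : (∫ x in z.re..w.re, p x w.im) - (∫ x in z.re..w.re, p x z.im) =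
        Complex.I * ∫ x in z.re..w.re, ∫ y in z.im..w.im, f x y := by
      rw [← intervalIntegral.integral_sub (i1 _ (him' w hw)) (i1 _ (him' z hz)),
        ← intervalIntegral.integral_const_mul]
      exact intervalIntegral.integral_congr fun x _ => dy x _ _
    have e2 : (∫ y in z.im..w.im, p w.re y) - (∫ y in z.im..w.im, p z.re y) =
        ∫ y in z.im..w.im, ∫ x in z.re..w.re, f x y := by
      rw [← intervalIntegral.integral_sub (i2 _) (i2 _)]
      exact intervalIntegral.integral_congr fun y hy => dx _ (hre' z hz) _ (hre' w hw) y (hsub2 hy)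
    rw [tol_fubini hf.meas hf.bd] at e1
    linear_combination Complex.I * e2 - e1
  have hdiff : DifferentiableOn ℂ P (Metric.ball w0 r) :=
    (Complex.isConservativeOn_and_continuousOn_iff_isDifferentiableOn Metric.isOpen_ball).mp
      ⟨hcons, hcont⟩
  have hw0b : w0 ∈ Metric.ball w0 r := Metric.mem_ball_self hr
  have hder : ∀ z ∈ Metric.ball w0 r, deriv P z = f z.re z.im := by
    intro z hz
    have hd := (hdiff.differentiableAt (Metric.isOpen_ball.mem_nhds hz)).hasDerivAt
    have hline : HasDerivAt (fun t : ℝ => (t : ℂ) + z.im * Complex.I) 1 z.re :=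
      (Complex.ofRealCLM.hasDerivAt (x := z.re)).add_const _
    have hz' : ((z.re : ℝ) : ℂ) + z.im * Complex.I = z := Complex.re_add_im z
    have hd' : HasDerivAt P (deriv P z) (((z.re : ℝ) : ℂ) + z.im * Complex.I) := by rwa [hz']
    have hc := hd'.comp_of_eq z.re hline rfl
    have hi : HasDerivAt (fun x => p x0 z.im + ∫ s in x0..x, f s z.im) (f z.re z.im) z.re :=
      ((hf.cx z.im).integral_hasStrictDerivAt x0 z.re).hasDerivAt.const_add _
    have heq : (P ∘ fun t : ℝ => (t : ℂ) + z.im * Complex.I) =ᶠ[𝓝 z.re]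
        fun x => p x0 z.im + ∫ s in x0..x, f s z.im := by
      filter_upwards [isOpen_Ioo.mem_nhds (hre z hz)] with x hx
      rw [← dx x0 hx0 x (Ioo_subset_Icc_self hx) _ (him' z hz)]
      simp [hP]
    have := (hi.congr_of_eventuallyEq heq).unique hc
    simpa using this.symm
  have han : AnalyticAt ℂ P w0 := hdiff.analyticAt (Metric.isOpen_ball.mem_nhds hw0b)
  refine han.deriv.congr ?_
  filter_upwards [Metric.isOpen_ball.mem_nhds hw0b] with z hz using hder z hz
end tolM

section tolC
open MeasureTheory Set Function

lemma tol_closed {f : ℝ → ℝ → ℂ} (cy : ∀ x, Continuous (f x)) {ε M : ℝ} (hε : 0 < ε) :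
    IsClosed {p : ℝ × ℝ | ∀ x, |x - p.1| < ε → ‖f x p.2 - f p.1 p.2‖ ≤ M * |x - p.1|} := by
  refine IsSeqClosed.isClosed ?_
  intro u p hu hup
  have h1 : Tendsto (fun j => (u j).1) atTop (𝓝 p.1) := (continuous_fst.tendsto p).comp hup
  have h2 : Tendsto (fun j => (u j).2) atTop (𝓝 p.2) := (continuous_snd.tendsto p).comp hup
  have habs : ∀ x, Tendsto (fun j => |x - (u j).1|) atTop (𝓝 |x - p.1|) := fun x =>
    (tendsto_const_nhds.sub h1).abs
  have hf2 : ∀ x, Tendsto (fun j => f x (u j).2) atTop (𝓝 (f x p.2)) := fun x =>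
    ((cy x).tendsto p.2).comp h2
  have hd : Tendsto (fun j => f p.1 (u j).2 - f (u j).1 (u j).2) atTop (𝓝 0) := by
    have hb : Tendsto (fun j => M * |p.1 - (u j).1|) atTop (𝓝 0) := by
      simpa using (habs p.1).const_mul M
    refine squeeze_zero_norm' ?_ hb
    have : ∀ᶠ j in atTop, |p.1 - (u j).1| < ε :=
      (habs p.1).eventually_lt_const (by simpa using hε)
    filter_upwards [this] with j hj using hu j _ hj
  have hfu : Tendsto (fun j => f (u j).1 (u j).2) atTop (𝓝 (f p.1 p.2)) := by
    simpa using (hf2 p.1).sub hd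
  intro x hx
  refine le_of_tendsto_of_tendsto ((hf2 x).sub hfu).norm ((habs x).const_mul M) ?_
  filter_upwards [(habs x).eventually_lt_const hx] with j hj using hu j _ hj

lemma tol_closed' {f : ℝ → ℝ → ℂ} (cx : ∀ y, Continuous fun x => f x y) {ε M : ℝ} (hε : 0 < ε) :
    IsClosed {p : ℝ × ℝ | ∀ y, |y - p.2| < ε → ‖f p.1 y - f p.1 p.2‖ ≤ M * |y - p.2|} :=
  (tol_closed (f := fun y x => f x y) cx (M := M) hε).preimage continuous_swap

lemma tol_lip {g : ℝ → ℂ} {g' : ℂ} {x : ℝ} (h : HasDerivAt g g' x) :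
    ∃ N : ℕ, ∀ n : ℕ, N ≤ n → ∀ x', |x' - x| < 1 / ((n:ℝ) + 1) → ‖g x' - g x‖ ≤ n * |x' - x| := by
  obtain ⟨c, hc⟩ := h.isBigO_sub.bound
  obtain ⟨δ, hδ, hb⟩ := Metric.eventually_nhds_iff.mp hc
  obtain ⟨N, hN⟩ := exists_nat_gt (max c (1 / δ))
  refine ⟨N, fun n hn x' hx' => ?_⟩
  have hn' : (N:ℝ) ≤ n := by exact_mod_cast hn
  have h1 : 1 / ((n:ℝ) + 1) < δ := by
    rw [div_lt_comm₀ (by positivity) hδ]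
    linarith [le_max_right c (1 / δ)]
  have := hb (y := x') (by rw [Real.dist_eq]; linarith)
  refine this.trans ?_
  rw [Real.norm_eq_abs]
  gcongr
  linarith [le_max_left c (1 / δ)]

/-- Tolstov's theorem (bounded version of Looman-Menchoff). -/
theorem tol_core {f : ℝ → ℝ → ℂ} {C : ℝ} (hf : TolSep f C) {V : Set (ℝ × ℝ)} (hV : IsOpen V)
    (hd : ∀ p ∈ V, ∃ g, HasDerivAt (fun x => f x p.2) g p.1 ∧
      HasDerivAt (fun y => f p.1 y) (Complex.I * g) p.2) :
    ∀ p ∈ V, AnalyticAt ℂ (fun z : ℂ => f z.re z.im) (p.1 + p.2 * Complex.I) := by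
  set An : Set (ℝ × ℝ) :=
    {p | AnalyticAt ℂ (fun z : ℂ => f z.re z.im) (p.1 + p.2 * Complex.I)} with hAn
  have hAno : IsOpen An :=
    (isOpen_analyticAt ℂ (fun z : ℂ => f z.re z.im)).preimage
      (f := fun p : ℝ × ℝ => ((p.1 : ℂ) + p.2 * Complex.I)) (by fun_prop)
  by_contra! hcon
  obtain ⟨q, hqV, hqA⟩ := hcon
  set K : Set (ℝ × ℝ) := V ∩ Anᶜ with hK
  have hKl : IsLocallyClosed K := hV.isLocallyClosed.inter hAno.isClosed_compl.isLocallyClosed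
  haveI : LocallyCompactSpace K := hKl.locallyCompactSpace
  haveI : Nonempty K := ⟨⟨q, hqV, hqA⟩⟩
  set Q : ℕ → Set (ℝ × ℝ) := fun n =>
    {p : ℝ × ℝ | ∀ x, |x - p.1| < 1 / ((n:ℝ) + 1) → ‖f x p.2 - f p.1 p.2‖ ≤ n * |x - p.1|} ∩
    {p : ℝ × ℝ | ∀ y, |y - p.2| < 1 / ((n:ℝ) + 1) → ‖f p.1 y - f p.1 p.2‖ ≤ n * |y - p.2|} with hQ
  have hQc : ∀ n, IsClosed (Q n) := fun n =>
    (tol_closed hf.cy (by positivity)).inter (tol_closed' hf.cx (by positivity))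
  obtain ⟨n, ⟨p0, hp0K⟩, hp0i⟩ := nonempty_interior_of_iUnion_of_closed
    (f := fun n => (Subtype.val ⁻¹' (Q n) : Set K))
    (fun n => (hQc n).preimage continuous_subtype_val) (by
      refine eq_univ_of_forall fun p => mem_iUnion.mpr ?_
      obtain ⟨g, hg1, hg2⟩ := hd p.1 p.2.1
      obtain ⟨N1, h1⟩ := tol_lip hg1
      obtain ⟨N2, h2⟩ := tol_lip hg2
      exact ⟨max N1 N2, h1 _ (le_max_left _ _), h2 _ (le_max_right _ _)⟩)
  rw [mem_interior] at hp0i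
  obtain ⟨T, hTQ, hTo, hpT⟩ := hp0i
  obtain ⟨W, hWo, rfl⟩ := isOpen_induced_iff.mp hTo
  have hWQ : ∀ p ∈ W, p ∈ K → p ∈ Q n := fun p hp hpK => hTQ (a := ⟨p, hpK⟩) hp
  have hVW : V ∩ W ∈ 𝓝 p0 := (hV.inter hWo).mem_nhds ⟨hp0K.1, hpT⟩
  obtain ⟨ρ, hρ, hρs⟩ := Metric.mem_nhds_iff.mp hVW
  have hn0 : (0:ℝ) < 1 / ((n:ℝ) + 1) := by positivity
  obtain ⟨r, hr, hrρ, hrn⟩ : ∃ r : ℝ, 0 < r ∧ r < ρ ∧ 2 * r < 1 / ((n:ℝ) + 1) := by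
    refine ⟨min ρ (1 / ((n:ℝ) + 1)) / 4, by positivity, ?_, ?_⟩
    · have := min_le_left ρ (1 / ((n:ℝ) + 1)); linarith
    · have := min_le_right ρ (1 / ((n:ℝ) + 1)); linarith
  have hball : ∀ x y, x ∈ Icc (p0.1 - r) (p0.1 + r) → y ∈ Icc (p0.2 - r) (p0.2 + r) →
      (x, y) ∈ V ∩ W := by
    intro x y hx hy
    refine hρs ?_
    rw [Metric.mem_ball, Prod.dist_eq]
    refine (max_le ?_ ?_).trans_lt hrρ
    · rw [Real.dist_eq, abs_le]; constructor <;> linarith [hx.1, hx.2]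
    · rw [Real.dist_eq, abs_le]; constructor <;> linarith [hy.1, hy.2]
  set K1 : Set (ℝ × ℝ) := (Icc (p0.1 - r) (p0.1 + r) ×ˢ Icc (p0.2 - r) (p0.2 + r)) ∩ Anᶜ with hK1
  have hK1c : IsClosed K1 := (isClosed_Icc.prod isClosed_Icc).inter hAno.isClosed_compl
  have hK1V : ∀ p ∈ K1, p ∈ V := fun p hp => (hball p.1 p.2 hp.1.1 hp.1.2).1
  have hK1Q : ∀ p ∈ K1, p ∈ Q n := fun p hp =>
    hWQ p (hball p.1 p.2 hp.1.1 hp.1.2).2 ⟨hK1V p hp, hp.2⟩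
  set D : ℝ → ℝ → ℂ := fun x y => K1.indicator (fun p => deriv (fun x => f x p.2) p.1) (x, y)
    with hD
  have hD1 : ∀ p ∈ K1, D p.1 p.2 = deriv (fun x => f x p.2) p.1 := fun p hp =>
    indicator_of_mem (s := K1) (a := (p.1, p.2)) hp _
  have hD0 : ∀ x y, (x, y) ∉ K1 → D x y = 0 := fun x y h => indicator_of_notMem h _
  have hdx : ∀ p ∈ K1, HasDerivAt (fun x => f x p.2) (D p.1 p.2) p.1 := by
    intro p hp
    obtain ⟨g, h1, -⟩ := hd p (hK1V p hp)
    rw [hD1 p hp, h1.deriv]; exact h1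
  have hdy : ∀ p ∈ K1, HasDerivAt (fun y => f p.1 y) (Complex.I * D p.1 p.2) p.2 := by
    intro p hp
    obtain ⟨g, h1, h2⟩ := hd p (hK1V p hp)
    rw [hD1 p hp, h1.deriv]; exact h2
  have hDb : ∀ x y, ‖D x y‖ ≤ n := by
    intro x y
    by_cases hxy : (x, y) ∈ K1
    · refine (hdx _ hxy).le_of_lip' (Nat.cast_nonneg n) ?_
      filter_upwards [Metric.ball_mem_nhds x hn0] with x' hx'
      exact (hK1Q _ hxy).1 x' (by simpa [Real.dist_eq] using hx')
    · rw [hD0 x y hxy, norm_zero]; exact Nat.cast_nonneg n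
  have hDm : Measurable (uncurry D) := by
    refine measurable_of_tendsto_metrizable (f := fun (m : ℕ) => K1.indicator
      (fun p : ℝ × ℝ => (1 / ((m:ℝ) + 1))⁻¹ • (f (p.1 + 1 / ((m:ℝ) + 1)) p.2 - f p.1 p.2))) ?_ ?_
    · intro m
      refine Measurable.indicator ?_ hK1c.measurableSet
      have m1 : Measurable fun p : ℝ × ℝ => f (p.1 + 1 / ((m:ℝ) + 1)) p.2 :=
        hf.meas.comp (g := uncurry f) (f := fun p : ℝ × ℝ => (p.1 + 1 / ((m:ℝ) + 1), p.2))
          (by fun_prop)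
      have m2 : Measurable fun p : ℝ × ℝ => f p.1 p.2 := hf.meas
      exact (m1.sub m2).const_smul ((1 / ((m:ℝ) + 1))⁻¹)
    · rw [tendsto_pi_nhds]
      rintro ⟨x, y⟩
      by_cases hxy : (x, y) ∈ K1
      · simp only [indicator_of_mem hxy, uncurry]
        have ht : Tendsto (fun m : ℕ => 1 / ((m:ℝ) + 1)) atTop (𝓝[>] 0) :=
          tendsto_nhdsWithin_iff.mpr ⟨tendsto_one_div_add_atTop_nhds_zero_nat,
            Eventually.of_forall fun m => by simp only [mem_Ioi]; positivity⟩
        exact (hdx _ hxy).tendsto_slope_zero_right.comp ht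
      · simp only [indicator_of_notMem hxy, uncurry, hD0 x y hxy]
        exact tendsto_const_nhds
  have hTK : TolK f D K1 n (p0.1 - r) (p0.1 + r) (p0.2 - r) (p0.2 + r) :=
    { hM := Nat.cast_nonneg n
      Dm := hDm
      Db := hDb
      cl := hK1c
      Lx := fun s y k hs hy x hx => (hK1Q _ k).1 x (by
        rw [abs_lt]; constructor <;> linarith [hs.1, hs.2, hx.1, hx.2])
      Ly := fun x s k hx hs y hy => (hK1Q _ k).2 y (by
        rw [abs_lt]; constructor <;> linarith [hs.1, hs.2, hy.1, hy.2])
      dx := fun x y k _ _ => hdx _ k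
      dy := fun x y k _ _ => hdy _ k
      D0 := hD0
      hol := fun x y k hx hy => by
        have : (x, y) ∈ An := by
          by_contra hna
          exact k ⟨⟨hx, hy⟩, hna⟩
        exact AnalyticAt.differentiableAt this }
  refine hp0K.2 (tol_morera hf hr fun a b c d hab hcd ha hb hc hd => ?_)
  exact TolK.vanish hf (hTK.mono ha hb hc hd) hab hcd
end tolC

section tolF
open Set Function
variable {A : Type*} [NormedCommRing A] [NormedAlgebra ℂ A] {E : Submodule ℝ A}

lemma tol_dir {Φ : E → A} {ζ : E} {g : A} (h : GateauxDiffAt Φ ζ g) (φ : A →L[ℂ] ℂ)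
    (hφ : ∀ a b, φ (a * b) = φ a * φ b) (v : E) :
    HasDerivAt (fun t : ℝ => φ (Φ (ζ + t • v))) (φ (v : A) * φ g) 0 := by
  have key : ∀ v : E, Tendsto (fun δ : ℝ => δ⁻¹ • (φ (Φ (ζ + δ • v)) - φ (Φ ζ)))
      (𝓝[>] (0 : ℝ)) (𝓝 (φ (v : A) * φ g)) := by
    intro v
    have := (φ.continuous.tendsto _).comp (h v)
    rw [hφ] at this
    refine this.congr fun δ => ?_
    simp only [comp_apply]
    rw [← map_sub, ← Complex.coe_smul, ← Complex.coe_smul, map_smul]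
  rw [hasDerivAt_iff_tendsto_slope_zero, ← nhdsLT_sup_nhdsGT, tendsto_sup]
  constructor
  · have hn : Tendsto (fun t : ℝ => -t) (𝓝[<] 0) (𝓝[>] 0) := by
      refine tendsto_nhdsWithin_iff.mpr ⟨?_, ?_⟩
      · have : Tendsto (fun t : ℝ => -t) (𝓝 0) (𝓝 0) := by
          simpa using (continuous_neg.tendsto (0:ℝ))
        exact this.mono_left nhdsWithin_le_nhds
      · filter_upwards [self_mem_nhdsWithin] with t ht
        simpa using ht
    have := ((key (-v)).comp hn).neg
    have e : -(φ ((-v : E) : A) * φ g) = φ (v : A) * φ g := by simp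
    rw [e] at this
    refine this.congr fun t => ?_
    simp [inv_neg]
  · simpa using key v

lemma tol_dir' {Φ : E → A} {ζ : E} {g : A} (φ : A →L[ℂ] ℂ)
    (hφ : ∀ a b, φ (a * b) = φ a * φ b) (v : E) (t0 : ℝ)
    (h : GateauxDiffAt Φ (ζ + t0 • v) g) :
    HasDerivAt (fun t : ℝ => φ (Φ (ζ + t • v))) (φ (v : A) * φ g) t0 := by
  have h1 := tol_dir h φ hφ v
  have h2 : HasDerivAt (fun t : ℝ => φ (Φ (ζ + t0 • v + (t - t0) • v))) (φ (v : A) * φ g) t0 :=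
    HasDerivAt.comp_sub_const t0 t0 (by simpa using h1)
  refine h2.congr_of_eventuallyEq (Eventually.of_forall fun t => ?_)
  simp only
  rw [add_assoc, ← add_smul, add_sub_cancel]

lemma tol_real (φ : A →L[ℂ] ℂ) (t : ℝ) (v : E) : φ ((t • v : E) : A) = t * φ (v : A) := by
  rw [Submodule.coe_smul, ← Complex.coe_smul, map_smul, smul_eq_mul]

lemma tol_slice {Ω : Set E} (hΩ : IsOpen Ω) {Φ Φ' : E → A}
    (hG : ∀ ζ ∈ Ω, GateauxDiffAt Φ ζ (Φ' ζ)) (φ : A →L[ℂ] ℂ)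
    (hφ : ∀ a b, φ (a * b) = φ a * φ b) {S : Set E} (hS : S ⊆ Ω) {w : ℂ}
    (hSw : ∀ ζ ∈ S, φ (ζ : A) = w) {ζ₁ ζ₂ : E} (h : JoinedIn S ζ₁ ζ₂) :
    φ (Φ ζ₁) = φ (Φ ζ₂) := by
  obtain ⟨γ, hγ⟩ := h
  have hlc : IsLocallyConstant (fun t => φ (Φ (γ t))) := by
    rw [IsLocallyConstant.iff_eventually_eq]
    intro t
    obtain ⟨ρ, hρ, hb⟩ := Metric.isOpen_iff.mp hΩ _ (hS (hγ t))
    filter_upwards [γ.continuous.continuousAt (Metric.ball_mem_nhds (γ t) hρ)] with s hs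
    have hs' : γ s ∈ Metric.ball (γ t) ρ := hs
    set m : E := γ s - γ t with hm
    have hm0 : φ (m : A) = 0 := by
      rw [hm, Submodule.coe_sub, map_sub, hSw _ (hγ s), hSw _ (hγ t), sub_self]
    have hmn : ‖m‖ < ρ := by rw [hm, ← dist_eq_norm]; exact hs'
    have hder : ∀ τ ∈ Icc (0:ℝ) 1, HasDerivAt (fun τ : ℝ => φ (Φ (γ t + τ • m))) 0 τ := by
      intro τ hτ
      have hmem : γ t + τ • m ∈ Ω := by
        apply hb
        rw [Metric.mem_ball, dist_eq_norm, add_sub_cancel_left, norm_smul, Real.norm_eq_abs,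
          abs_of_nonneg hτ.1]
        have := norm_nonneg m
        nlinarith [hτ.2]
      have := tol_dir' φ hφ m τ (hG _ hmem)
      rwa [hm0, zero_mul] at this
    have := constant_of_has_deriv_right_zero (a := (0:ℝ)) (b := 1)
      (fun τ hτ => (hder τ hτ).continuousAt.continuousWithinAt)
      (fun τ hτ => (hder τ (Ico_subset_Icc_self hτ)).hasDerivWithinAt) 1 ⟨zero_le_one, le_rfl⟩
    simpa [hm] using this
  have := hlc.apply_eq_of_preconnectedSpace 0 1
  simpa using this

/-- Clamping to `[-r, r]`. -/
noncomputable def tolCl (r s : ℝ) : ℝ := max (-r) (min r s)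

lemma tolCl_cont (r : ℝ) : Continuous (tolCl r) := by unfold tolCl; fun_prop

lemma tolCl_mem {r : ℝ} (hr : 0 < r) (s : ℝ) : tolCl r s ∈ Icc (-r) r :=
  ⟨le_max_left _ _, max_le (by linarith) (min_le_left _ _)⟩

lemma tolCl_id {r s : ℝ} (hs : s ∈ Ioo (-r) r) : tolCl r s = s := by
  unfold tolCl
  rw [min_eq_right hs.2.le, max_eq_right hs.1.le]

lemma tol_local {Ω : Set E} (hΩ : IsOpen Ω) {Φ Φ' : E → A} (hlb : IsLocBoundedOn Ω Φ)
    (hG : ∀ ζ ∈ Ω, GateauxDiffAt Φ ζ (Φ' ζ)) (φ : A →L[ℂ] ℂ)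
    (hφ : ∀ a b, φ (a * b) = φ a * φ b) (hsurj : Surjective fun x : E => φ (x : A))
    {F : ℂ → ℂ} (hF : ∀ ζ ∈ Ω, F (φ (ζ : A)) = φ (Φ ζ)) {ζ : E} (hζ : ζ ∈ Ω) :
    DifferentiableAt ℂ F (φ (ζ : A)) := by
  obtain ⟨u, hu⟩ := hsurj 1
  obtain ⟨v, hv⟩ := hsurj Complex.I
  simp only at hu hv
  obtain ⟨ρ₁, hρ₁, hb₁⟩ := Metric.isOpen_iff.mp hΩ _ hζ
  obtain ⟨ρ₂, hρ₂, C, hC⟩ := hlb ζ hζ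
  have hpos : 0 < ‖u‖ + ‖v‖ + 1 := by positivity
  set r : ℝ := min ρ₁ ρ₂ / (‖u‖ + ‖v‖ + 1) with hr
  have hr0 : 0 < r := by positivity
  have hsmall : ∀ s ∈ Icc (-r) r, ∀ t ∈ Icc (-r) r, ‖s • u + t • v‖ < min ρ₁ ρ₂ := by
    intro s hs t ht
    have hs' : |s| ≤ r := abs_le.mpr hs
    have ht' : |t| ≤ r := abs_le.mpr ht
    calc ‖s • u + t • v‖ ≤ ‖s • u‖ + ‖t • v‖ := norm_add_le _ _
      _ = |s| * ‖u‖ + |t| * ‖v‖ := by rw [norm_smul, norm_smul]; rfl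
      _ ≤ r * ‖u‖ + r * ‖v‖ := by gcongr
      _ < r * (‖u‖ + ‖v‖ + 1) := by linarith
      _ = min ρ₁ ρ₂ := by rw [hr]; field_simp
  have hmem : ∀ s ∈ Icc (-r) r, ∀ t ∈ Icc (-r) r, ζ + s • u + t • v ∈ Ω := by
    intro s hs t ht
    apply hb₁
    rw [Metric.mem_ball, dist_eq_norm, add_assoc, add_sub_cancel_left]
    exact (hsmall s hs t ht).trans_le (min_le_left _ _)
  set f : ℝ → ℝ → ℂ := fun s t => φ (Φ (ζ + tolCl r s • u + tolCl r t • v)) with hf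
  have hdx : ∀ s ∈ Icc (-r) r, ∀ t ∈ Icc (-r) r,
      HasDerivAt (fun s : ℝ => φ (Φ (ζ + s • u + t • v))) (φ (Φ' (ζ + s • u + t • v))) s := by
    intro s hs t ht
    have h := hG _ (hmem s hs t ht)
    have e : ∀ s : ℝ, ζ + s • u + t • v = ζ + t • v + s • u := fun s => by abel
    simp only [e] at h ⊢
    have := tol_dir' φ hφ u s h
    rwa [hu, one_mul] at this
  have hdy : ∀ s ∈ Icc (-r) r, ∀ t ∈ Icc (-r) r,
      HasDerivAt (fun t : ℝ => φ (Φ (ζ + s • u + t • v)))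
        (Complex.I * φ (Φ' (ζ + s • u + t • v))) t := by
    intro s hs t ht
    have := tol_dir' φ hφ v t (hG _ (hmem s hs t ht))
    rwa [hv] at this
  have hsep : TolSep f (‖φ‖ * C) :=
    { cx := fun t => ContinuousOn.comp_continuous
        (g := fun s : ℝ => φ (Φ (ζ + s • u + tolCl r t • v))) (s := Icc (-r) r)
        (fun s hs => (hdx s hs _ (tolCl_mem hr0 t)).continuousAt.continuousWithinAt)
        (tolCl_cont r) (tolCl_mem hr0)
      cy := fun s => ContinuousOn.comp_continuous
        (g := fun t : ℝ => φ (Φ (ζ + tolCl r s • u + t • v))) (s := Icc (-r) r)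
        (fun t ht => (hdy _ (tolCl_mem hr0 s) t ht).continuousAt.continuousWithinAt)
        (tolCl_cont r) (tolCl_mem hr0)
      bd := fun s t => by
        refine (φ.le_opNorm _).trans ?_
        gcongr
        refine hC _ (hmem _ (tolCl_mem hr0 s) _ (tolCl_mem hr0 t)) ?_
        rw [add_assoc, add_sub_cancel_left]
        exact (hsmall _ (tolCl_mem hr0 s) _ (tolCl_mem hr0 t)).trans_le (min_le_right _ _) }
  have hcl : ∀ s ∈ Ioo (-r) r, ∀ᶠ s' in 𝓝 s, tolCl r s' = s' := fun s hs => by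
    filter_upwards [isOpen_Ioo.mem_nhds hs] with s' hs' using tolCl_id hs'
  have han := tol_core hsep (V := Ioo (-r) r ×ˢ Ioo (-r) r) (isOpen_Ioo.prod isOpen_Ioo) (by
    rintro ⟨s, t⟩ ⟨hs, ht⟩
    simp only at hs ht ⊢
    refine ⟨_, (hdx s (Ioo_subset_Icc_self hs) t (Ioo_subset_Icc_self ht)).congr_of_eventuallyEq ?_,
      (hdy s (Ioo_subset_Icc_self hs) t (Ioo_subset_Icc_self ht)).congr_of_eventuallyEq ?_⟩
    · filter_upwards [hcl s hs] with s' hs'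
      simp only [hf, hs', tolCl_id ht]
    · filter_upwards [hcl t ht] with t' ht'
      simp only [hf, ht', tolCl_id hs]) (0, 0)
    ⟨⟨by simpa using hr0, hr0⟩, ⟨by simpa using hr0, hr0⟩⟩
  have hd0 : DifferentiableAt ℂ (fun z : ℂ => f z.re z.im) 0 := by
    simpa using han.differentiableAt
  have hd1 : DifferentiableAt ℂ (fun z : ℂ => f (z - φ (ζ : A)).re (z - φ (ζ : A)).im)
      (φ (ζ : A)) :=
    DifferentiableAt.comp (𝕜 := ℂ) (g := fun z : ℂ => f z.re z.im)
      (f := fun z : ℂ => z - φ (ζ : A)) _ (by simpa using hd0) (by fun_prop)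
  refine hd1.congr_of_eventuallyEq ?_
  filter_upwards [Metric.ball_mem_nhds _ hr0] with z hz
  rw [Metric.mem_ball, dist_eq_norm] at hz
  have h1 : (z - φ (ζ : A)).re ∈ Ioo (-r) r :=
    abs_lt.mp ((Complex.abs_re_le_norm _).trans_lt hz)
  have h2 : (z - φ (ζ : A)).im ∈ Ioo (-r) r :=
    abs_lt.mp ((Complex.abs_im_le_norm _).trans_lt hz)
  have h3 := hF _ (hmem _ (Ioo_subset_Icc_self h1) _ (Ioo_subset_Icc_self h2))
  have h4 : φ ((ζ + (z - φ (ζ : A)).re • u + (z - φ (ζ : A)).im • v : E) : A) = z := by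
    rw [Submodule.coe_add, Submodule.coe_add, map_add, map_add, tol_real, tol_real, hu, hv, mul_one,
      add_assoc, Complex.re_add_im, add_sub_cancel]
  rw [h4] at h3
  simp only [hf, tolCl_id h1, tolCl_id h2]
  exact h3
end tolF

/-- Under condition (C) and the slice path-connectedness assumption, for each
character `φ` there is a function `F : ℂ → ℂ`, holomorphic on `φ(Ω)`, with
`F(φ(ζ)) = φ(Φ(ζ))` on `Ω`, whenever `Φ` is locally bounded and Gâteaux
differentiable in `Ω`. -/
theorem exists_holomorphic_factor
    {A : Type*} [NormedCommRing A] [NormedAlgebra ℂ A] [FiniteDimensional ℂ A]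
    {k : ℕ} (hk : 2 ≤ k) (e : Fin k → A) (he0 : e ⟨0, by omega⟩ = 1)
    (hli : LinearIndependent ℝ e)
    (hC : CondC (Submodule.span ℝ (Set.range e)))
    (Ω : Set (Submodule.span ℝ (Set.range e))) (hΩ : IsOpen Ω)
    (hconn : IsConnected Ω)
    (hslice : ∀ (φ : A →ₐ[ℂ] ℂ) (a : Submodule.span ℝ (Set.range e)),
      ∀ ζ₁ ∈ Ω ∩ ((fun m => a + m) ''
        {m : Submodule.span ℝ (Set.range e) | φ (m : A) = 0}),
      ∀ ζ₂ ∈ Ω ∩ ((fun m => a + m) ''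
        {m : Submodule.span ℝ (Set.range e) | φ (m : A) = 0}),
        JoinedIn (Ω ∩ ((fun m => a + m) ''
          {m : Submodule.span ℝ (Set.range e) | φ (m : A) = 0})) ζ₁ ζ₂)
    (Φ Φ' : Submodule.span ℝ (Set.range e) → A)
    (hlb : IsLocBoundedOn Ω Φ)
    (hG : ∀ ζ ∈ Ω, GateauxDiffAt Φ ζ (Φ' ζ)) :
    ∀ φ : A →ₐ[ℂ] ℂ, ∃ F : ℂ → ℂ,
      DifferentiableOn ℂ F
        ((fun ζ : Submodule.span ℝ (Set.range e) => φ (ζ : A)) '' Ω) ∧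
      ∀ ζ ∈ Ω, F (φ (ζ : A)) = φ (Φ ζ) := by
  intro φ
  set ψ : A →L[ℂ] ℂ := LinearMap.toContinuousLinearMap φ.toLinearMap with hψ
  have hψφ : ∀ a, ψ a = φ a := fun a => rfl
  have hmul : ∀ a b, ψ (a * b) = ψ a * ψ b := fun a b => map_mul φ a b
  have hwd : ∀ ζ₁ ∈ Ω, ∀ ζ₂ ∈ Ω, φ (ζ₁ : A) = φ (ζ₂ : A) → φ (Φ ζ₁) = φ (Φ ζ₂) := by
    intro ζ₁ h₁ ζ₂ h₂ he
    refine tol_slice hΩ hG ψ hmul (w := φ (ζ₁ : A)) Set.inter_subset_left ?_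
      (hslice φ ζ₁ ζ₁ ⟨h₁, 0, by simp, by simp⟩ ζ₂ ⟨h₂, ζ₂ - ζ₁, by simp [he], by simp⟩)
    rintro ζ ⟨-, m, hm, rfl⟩
    have hm' : φ (m : A) = 0 := hm
    simp [hψφ, hm']
  classical
  let F : ℂ → ℂ := fun w => if h : ∃ ζ ∈ Ω, φ (ζ : A) = w then φ (Φ h.choose) else 0
  have hF : ∀ ζ ∈ Ω, F (φ (ζ : A)) = φ (Φ ζ) := by
    intro ζ hζ
    have h : ∃ ζ' ∈ Ω, φ (ζ' : A) = φ (ζ : A) := ⟨ζ, hζ, rfl⟩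
    simp only [F, dif_pos h]
    exact hwd _ h.choose_spec.1 _ hζ h.choose_spec.2
  refine ⟨F, ?_, hF⟩
  rintro _ ⟨ζ, hζ, rfl⟩
  exact (tol_local hΩ hlb hG ψ hmul (hC φ) hF hζ).differentiableWithinAt
end
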